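/- Let f: ℕ → ℕ be computable. Then there is an increasing h: ℕ → ℕ such that: (i) h(n) ≥ f(n²) for every n ∈ ℕ; (ii) the map 1^n ↦ 1^{h(n)} is computable in time h(n)^{O(1)}; (iii) there is an L^r_ar-sentence φ_h such that for every x ∈ {0,1}* with |x| ≥ 2, S(x) ⊨ φ_h iff x = 1^{h(n)} for some n ∈ ℕ; (iv) there is an L^r_ar-formula φ(x) that defines the element n in S(1^{h(n)}) for every n ≥ 2. (Lemma 6.1) -/

import Mathlib

/-! # Framework: strings, pairing, Turing machines, circuits, complexity classes -/

namespace PFW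

/-- Binary strings `{0,1}*`. -/
abbrev Str := List Bool

/-- The string `1^n`. -/
def unary (n : ℕ) : Str := List.replicate n true

/-- The binary representation of a natural number, as a string. -/
def natStr (n : ℕ) : Str := Nat.bits n

/-- `num(x)`: the natural number whose binary expansion is `1x`. -/
def strNum (x : Str) : ℕ := x.foldl (fun a b => 2 * a + cond b 1 0) 1

/-- Duplicate every bit. -/
def dbl (x : Str) : Str := x.foldr (fun b r => b :: b :: r) []

/-- The pairing `⟨x,y⟩ = x₀x₀…x_{|x|-1}x_{|x|-1} 01 y₀y₀…y_{|y|-1}y_{|y|-1}`. -/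
def pairStr (x y : Str) : Str := dbl x ++ [false, true] ++ dbl y

/-- Inverse of bit duplication. -/
def undbl : Str → Option Str
  | [] => some []
  | [_] => none
  | a :: b :: r => if a = b then (undbl r).map (a :: ·) else none

/-- Parse a string of the form `⟨x,y⟩` into `(x, y)`. -/
def splitPair : Str → Option (Str × Str)
  | [] => none
  | [_] => none
  | a :: b :: r =>
    if a = b then (splitPair r).map (fun p => (a :: p.1, p.2))
    else if a = false then (undbl r).map (fun y => (([] : Str), y))
    else none

/-- The parameterization mapping a string of the form `⟨1^n, y⟩` to `|y|`
    and all other strings to `0`. -/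
def tallyFstParam (x : Str) : ℕ :=
  match splitPair x with
  | some (u, y) => if u.all (fun b => b) then y.length else 0
  | none => 0

/-! ## Turing machines (single tape, alphabet {0,1} plus blank) -/

/-- Head movements. -/
inductive Move where
  | L | R | S
deriving DecidableEq

def Move.apply : Move → ℤ → ℤ
  | .L, p => p - 1
  | .R, p => p + 1
  | .S, p => p

/-- A transition: in state `src` reading `read`, go to state `dst`,
    write `write` and move the head. -/
structure MTrans where
  src : ℕ
  read : Option Bool
  dst : ℕ
  write : Option Bool
  move : Move

/-- A nondeterministic Turing machine (start state `0`). -/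
structure NTM where
  states : ℕ
  accept : ℕ
  trans : List MTrans

/-- A configuration: state, head position and tape content. -/
structure Cfg where
  state : ℕ
  pos : ℤ
  tape : ℤ → Option Bool

/-- The tape holding input `x`. -/
def inputTape (x : Str) : ℤ → Option Bool :=
  fun i => if 0 ≤ i ∧ i < (x.length : ℤ) then x[i.toNat]? else none

/-- The start configuration on input `x`. -/
def initCfg (x : Str) : Cfg := ⟨0, 0, inputTape x⟩

/-- One computation step. -/
def NTM.Step (M : NTM) (c c' : Cfg) : Prop :=
  ∃ t ∈ M.trans, t.src = c.state ∧ t.read = c.tape c.pos ∧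
    c' = ⟨t.dst, t.move.apply c.pos, Function.update c.tape c.pos t.write⟩

/-- `f` is a run of length `n` of `M`. -/
def NTM.RunFrom (M : NTM) (f : ℕ → Cfg) (n : ℕ) : Prop := ∀ i < n, M.Step (f i) (f (i + 1))

/-- `M` accepts input `x` in exactly `n` steps. -/
def NTM.AcceptsExactly (M : NTM) (x : Str) (n : ℕ) : Prop :=
  ∃ f : ℕ → Cfg, f 0 = initCfg x ∧ M.RunFrom f n ∧ (f n).state = M.accept

/-- `M` accepts input `x` in at most `n` steps. -/
def NTM.AcceptsIn (M : NTM) (x : Str) (n : ℕ) : Prop := ∃ m ≤ n, M.AcceptsExactly x m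

/-- `M` is deterministic. -/
def NTM.Deterministic (M : NTM) : Prop := ∀ c c₁ c₂, M.Step c c₁ → M.Step c c₂ → c₁ = c₂

/-- Binary encoding of a machine. -/
def Move.code : Move → ℕ | .L => 0 | .R => 1 | .S => 2

def MTrans.code (t : MTrans) : ℕ :=
  Encodable.encode (t.src, t.read, t.dst, t.write, t.move.code)

def NTM.code (M : NTM) : Str :=
  natStr (Encodable.encode (M.states, M.accept, M.trans.map MTrans.code))

/-- `|M|`, the size of a machine. -/
def NTM.size (M : NTM) : ℕ := M.code.length

/-- A deterministic machine computes output `y` from input `x` in `t` steps: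
    it halts in the accepting state, head at position 0, with `y` on the tape. -/
def NTM.ComputesIn (M : NTM) (x y : Str) (t : ℕ) : Prop :=
  ∃ f : ℕ → Cfg, f 0 = initCfg x ∧ M.RunFrom f t ∧ (f t).state = M.accept ∧
    (f t).pos = 0 ∧ (f t).tape = inputTape y

/-- `F` is computable in polynomial time. -/
def PolyTimeFun (F : Str → Str) : Prop :=
  ∃ M : NTM, M.Deterministic ∧ ∃ c : ℕ,
    ∀ x : Str, ∃ t ≤ c * (x.length + 1) ^ c, M.ComputesIn x (F x) t

/-- A parameterization `κ : {0,1}* → ℕ` is polynomial time computable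
    (the value is produced in binary). -/
def PolyTimeParam (κ : Str → ℕ) : Prop := PolyTimeFun (fun x => natStr (κ x))

/-! ## Classical complexity classes -/

/-- `Q ∈ NP`. -/
def InNP (Q : Set Str) : Prop :=
  ∃ M : NTM, ∃ c : ℕ, ∀ x : Str, x ∈ Q ↔ M.AcceptsIn x (c * (x.length + 1) ^ c)

/-- `Q ∈ NE`: nondeterministic time `2^{O(n)}`. -/
def InNE (Q : Set Str) : Prop :=
  ∃ M : NTM, ∃ c : ℕ, ∀ x : Str, x ∈ Q ↔ M.AcceptsIn x (2 ^ (c * (x.length + 1)))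

/-- `Q ∈ E`: deterministic time `2^{O(n)}`. -/
def InE (Q : Set Str) : Prop :=
  ∃ M : NTM, M.Deterministic ∧ ∃ c : ℕ, ∀ x : Str, x ∈ Q ↔ M.AcceptsIn x (2 ^ (c * (x.length + 1)))

/-! ## Alternating machines and the linear time hierarchy -/

/-- An alternating Turing machine: a machine together with a labelling of the
    states as universal (`true`) or existential (`false`). -/
structure ATM where
  toNTM : NTM
  universal : ℕ → Bool

/-- `M.Acc t a c`: starting from configuration `c`, the alternating machine `M`
    accepts within `t` steps using at most `a` alternations. -/
def ATM.Acc (M : ATM) : ℕ → ℕ → Cfg → Prop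
  | 0, _, c => c.state = M.toNTM.accept
  | t + 1, a, c =>
    c.state = M.toNTM.accept ∨
      (if M.universal c.state then
        (∃ c', M.toNTM.Step c c') ∧
          ∀ c', M.toNTM.Step c c' →
            (if M.universal c'.state = M.universal c.state then ATM.Acc M t a c'
             else a ≠ 0 ∧ ATM.Acc M t (a - 1) c')
       else
        ∃ c', M.toNTM.Step c c' ∧
          (if M.universal c'.state = M.universal c.state then ATM.Acc M t a c'
           else a ≠ 0 ∧ ATM.Acc M t (a - 1) c'))

/-- `Q` is accepted by an alternating machine in linear time with
    at most `a` alternations. -/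
def InLINHBounded (a : ℕ) (Q : Set Str) : Prop :=
  ∃ M : ATM, ∃ c : ℕ, ∀ x : Str, x ∈ Q ↔ M.Acc (c * (x.length + 1)) a (initCfg x)

/-- `Q ∈ LINH`: the linear time hierarchy. -/
def InLINH (Q : Set Str) : Prop := ∃ a : ℕ, InLINHBounded a Q

/-! ## Space bounded machines (read-only input tape plus a work tape) -/

structure OTrans where
  src : ℕ
  readIn : Option Bool
  readWork : Option Bool
  dst : ℕ
  moveIn : Move
  writeWork : Option Bool
  moveWork : Move

/-- A (nondeterministic) machine with a read-only input tape and one work tape. -/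
structure OTM where
  states : ℕ
  accept : ℕ
  trans : List OTrans

structure OCfg where
  state : ℕ
  inPos : ℤ
  workPos : ℤ
  work : ℤ → Option Bool

def OTM.Step (M : OTM) (x : Str) (c c' : OCfg) : Prop :=
  ∃ t ∈ M.trans, t.src = c.state ∧ t.readIn = inputTape x c.inPos ∧
    t.readWork = c.work c.workPos ∧
    c' = ⟨t.dst, t.moveIn.apply c.inPos, t.moveWork.apply c.workPos,
          Function.update c.work c.workPos t.writeWork⟩

def OTM.initCfg : OCfg := ⟨0, 0, 0, fun _ => none⟩

/-- `M` accepts `x` using work space at most `s`. -/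
def OTM.AcceptsSpace (M : OTM) (x : Str) (s : ℕ) : Prop :=
  ∃ n : ℕ, ∃ f : ℕ → OCfg, f 0 = OTM.initCfg ∧ (∀ i < n, M.Step x (f i) (f (i + 1))) ∧
    (f n).state = M.accept ∧ ∀ i ≤ n, (f i).workPos.natAbs ≤ s

def OTM.Deterministic (M : OTM) : Prop :=
  ∀ x c c₁ c₂, M.Step x c c₁ → M.Step x c c₂ → c₁ = c₂

/-- `Q ∈ NLINSPACE`. -/
def InNLINSP (Q : Set Str) : Prop :=
  ∃ M : OTM, ∃ c : ℕ, ∀ x : Str, x ∈ Q ↔ M.AcceptsSpace x (c * (x.length + 1))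

/-- `Q ∈ LINSPACE`. -/
def InLINSP (Q : Set Str) : Prop :=
  ∃ M : OTM, M.Deterministic ∧ ∃ c : ℕ, ∀ x : Str, x ∈ Q ↔ M.AcceptsSpace x (c * (x.length + 1))

/-! ## Parameterized classes defined by machines -/

/-- `(Q,κ) ∈ para-NP`. -/
def InParaNP (Q : Set Str) (κ : Str → ℕ) : Prop :=
  PolyTimeParam κ ∧
  ∃ M : NTM, ∃ f : ℕ → ℕ, Computable f ∧ ∃ c : ℕ,
    ∀ x : Str, x ∈ Q ↔ M.AcceptsIn x (f (κ x) * (x.length + 1) ^ c)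

/-- `(Q,κ) ∈ FPT = para-P`. -/
def InFPT (Q : Set Str) (κ : Str → ℕ) : Prop :=
  PolyTimeParam κ ∧
  ∃ M : NTM, M.Deterministic ∧ ∃ f : ℕ → ℕ, Computable f ∧ ∃ c : ℕ,
    ∀ x : Str, x ∈ Q ↔ M.AcceptsIn x (f (κ x) * (x.length + 1) ^ c)

/-- `(Q,κ) ∈ para-NL`: nondeterministic space `f(κ(x)) + O(log |x|)`. -/
def InParaNL (Q : Set Str) (κ : Str → ℕ) : Prop :=
  PolyTimeParam κ ∧
  ∃ M : OTM, ∃ f : ℕ → ℕ, Computable f ∧ ∃ c : ℕ,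
    ∀ x : Str, x ∈ Q ↔ M.AcceptsSpace x (f (κ x) + c * (Nat.log 2 (x.length + 1) + 1))

/-- `(Q,κ) ∈ para-L`: deterministic space `f(κ(x)) + O(log |x|)`. -/
def InParaL (Q : Set Str) (κ : Str → ℕ) : Prop :=
  PolyTimeParam κ ∧
  ∃ M : OTM, M.Deterministic ∧ ∃ f : ℕ → ℕ, Computable f ∧ ∃ c : ℕ,
    ∀ x : Str, x ∈ Q ↔ M.AcceptsSpace x (f (κ x) + c * (Nat.log 2 (x.length + 1) + 1))

/-! ## Circuits -/

/-- A gate of a circuit: an input bit, a constant, or a `¬`, `∧`, `∨` gate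
    (with unbounded fan-in for `∧` and `∨`) whose arguments are
    references to previous gates. -/
inductive Gate where
  | input (i : ℕ)
  | const (b : Bool)
  | not (j : ℕ)
  | and (js : List ℕ)
  | or (js : List ℕ)

/-- A circuit is a list of gates, each one referring to earlier gates;
    its output is the value of the last gate. -/
structure Circuit where
  gates : List Gate

/-- Value of a gate, given the input string and the values of earlier gates. -/
def Gate.val (x : Str) (vs : List Bool) : Gate → Bool
  | .input i => x.getD i false
  | .const b => b
  | .not j => !(vs.getD j false)
  | .and js => js.all fun j => vs.getD j false
  | .or js => js.any fun j => vs.getD j false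

def Circuit.vals (C : Circuit) (x : Str) : List Bool :=
  C.gates.foldl (fun vs g => vs ++ [g.val x vs]) []

/-- Evaluate a circuit on an input string. -/
def Circuit.eval (C : Circuit) (x : Str) : Bool := (C.vals x).getLast?.getD false

/-- Depth contribution of a gate (as usual, negations do not count
    towards the depth). -/
def Gate.dep (ds : List ℕ) : Gate → ℕ
  | .input _ => 0
  | .const _ => 0
  | .not j => ds.getD j 0
  | .and js => (js.map fun j => ds.getD j 0).foldr max 0 + 1
  | .or js => (js.map fun j => ds.getD j 0).foldr max 0 + 1

/-- The depth of a circuit. -/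
def Circuit.depth (C : Circuit) : ℕ :=
  (C.gates.foldl (fun ds g => ds ++ [g.dep ds]) []).foldr max 0

def Gate.fanin : Gate → ℕ
  | .and js => js.length
  | .or js => js.length
  | .not _ => 1
  | _ => 0

/-- The size of a circuit: number of gates plus number of wires. -/
def Circuit.size (C : Circuit) : ℕ := C.gates.length + (C.gates.map Gate.fanin).sum

def Gate.code : Gate → ℕ
  | .input i => Nat.pair 0 i
  | .const b => Nat.pair 1 (cond b 1 0)
  | .not j => Nat.pair 2 j
  | .and js => Nat.pair 3 (Encodable.encode js)
  | .or js => Nat.pair 4 (Encodable.encode js)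

/-- The binary encoding of a circuit. -/
def Circuit.code (C : Circuit) : Str := natStr (Encodable.encode (C.gates.map Gate.code))

/-- The input `⟨n, 1^k, i, b⟩` (with `n` and `i` in binary) for the machine
    checking the encoding of the circuit family. -/
def uniInput2 (n k i : ℕ) (b : Bool) : Str :=
  pairStr (natStr n) (pairStr (unary k) (pairStr (natStr i) [b]))

/-- dlogtime-style uniformity of a parameterized circuit family: a deterministic
    Turing machine decides in time `g(k) + O(log n)` whether the `i`-th bit of
    the binary encoding of `C_{n,k}` is `b`. -/
def UniformFamily2 (C : ℕ → ℕ → Circuit) : Prop :=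
  ∃ M : NTM, M.Deterministic ∧ ∃ g : ℕ → ℕ, Computable g ∧ ∃ e : ℕ,
    ∀ n k i b, ((C n k).code[i]? = some b ↔
      M.AcceptsIn (uniInput2 n k i b) (g k + e * (Nat.log 2 (n + 1) + 1)))

/-- `(Q,κ) ∈ para-AC⁰`: a uniform family `(C_{n,k})` of circuits of constant
    depth and size `f(k)·n^{O(1)}` (`f` computable) deciding `Q`. -/
def InParaAC0 (Q : Set Str) (κ : Str → ℕ) : Prop :=
  PolyTimeParam κ ∧
  ∃ C : ℕ → ℕ → Circuit, ∃ f : ℕ → ℕ, Computable f ∧ ∃ c d : ℕ,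
    (∀ n k, (C n k).size ≤ f k * (n + 1) ^ c ∧ (C n k).depth ≤ d) ∧
    (∀ x : Str, x ∈ Q ↔ (C x.length (κ x)).eval x = true) ∧
    UniformFamily2 C

def uniInput1 (n i : ℕ) (b : Bool) : Str := pairStr (natStr n) (pairStr (natStr i) [b])

/-- dlogtime-style uniformity of a circuit family. -/
def UniformFamily1 (C : ℕ → Circuit) : Prop :=
  ∃ M : NTM, M.Deterministic ∧ ∃ e : ℕ,
    ∀ n i b, ((C n).code[i]? = some b ↔
      M.AcceptsIn (uniInput1 n i b) (e * (Nat.log 2 (n + 1) + 1)))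

/-- `Q ∈ AC⁰` (dlogtime uniform). -/
def InAC0 (Q : Set Str) : Prop :=
  ∃ C : ℕ → Circuit, ∃ c d : ℕ,
    (∀ n, (C n).size ≤ (n + 1) ^ c ∧ (C n).depth ≤ d) ∧
    (∀ x : Str, x ∈ Q ↔ (C x.length).eval x = true) ∧
    UniformFamily1 C

/-- `Q ∈ AC⁰_d`: dlogtime uniform polynomial size circuits of depth at most `d`. -/
def InAC0Depth (d : ℕ) (Q : Set Str) : Prop :=
  ∃ C : ℕ → Circuit, ∃ c : ℕ,
    (∀ n, (C n).size ≤ (n + 1) ^ c ∧ (C n).depth ≤ d) ∧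
    (∀ x : Str, x ∈ Q ↔ (C x.length).eval x = true) ∧
    UniformFamily1 C

/-! ## The parameterized halting problems -/

/-- `p-Halt`: instances `⟨1^n, M⟩`, question: does the nondeterministic machine
    `M` accept the empty input in at most `n` steps? -/
def pHaltQ : Set Str :=
  { z | ∃ (n : ℕ) (M : NTM), z = pairStr (unary n) M.code ∧ ∃ m ≤ n, M.AcceptsExactly [] m }

/-- `p-Halt₌`: instances `⟨1^n, M⟩`, question: does the nondeterministic machine
    `M` accept the empty input in exactly `n` steps? -/
def pHaltEqQ : Set Str :=
  { z | ∃ (n : ℕ) (M : NTM), z = pairStr (unary n) M.code ∧ M.AcceptsExactly [] n }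

/-- `p-DHalt`: as `p-Halt` but with deterministic machines. -/
def pDHaltQ : Set Str :=
  { z | ∃ (n : ℕ) (M : NTM), z = pairStr (unary n) M.code ∧ M.Deterministic ∧
        ∃ m ≤ n, M.AcceptsExactly [] m }

/-- The parameterization `⟨1^n, M⟩ ↦ |M|` of the halting problems. -/
def haltParam : Str → ℕ := tallyFstParam

/-- `(Q,κ)` is almost tally: instances have the form `⟨1^n, x⟩` with `|x|`
    effectively bounded in the parameter. -/
def AlmostTally (Q : Set Str) (κ : Str → ℕ) : Prop :=
  (∀ z ∈ Q, ∃ (n : ℕ) (x : Str), z = pairStr (unary n) x) ∧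
  ∃ f : ℕ → ℕ, Computable f ∧ ∀ (n : ℕ) (x : Str), x.length ≤ f (κ (pairStr (unary n) x))

end PFW

/-! # String structures, the language `L^r_ar ∪ {ONE}`, interpretations -/

namespace PFW

open FirstOrder

/-- Function symbols of `L^r_ar ∪ {ONE}`: the constants `0` and `1`. -/
inductive LOneFun : ℕ → Type
  | zero : LOneFun 0
  | one : LOneFun 0

/-- Relation symbols of `L^r_ar ∪ {ONE}`: the unary `ONE`, the binary `<` and
    the ternary graphs of `+` and `×`. -/
inductive LOneRel : ℕ → Type
  | one : LOneRel 1
  | lt : LOneRel 2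
  | add : LOneRel 3
  | mul : LOneRel 3

/-- The relational language `L^r_ar ∪ {ONE}` of string structures. -/
def LOne : FirstOrder.Language := ⟨LOneFun, LOneRel⟩

/-- The size of the universe of the string structure `S(x)` (we pad to `2` to
    keep the structure total; for `|x| ≥ 2` it is exactly `|x|`). -/
def strLen (x : Str) : ℕ := max x.length 2

theorem two_le_strLen (x : Str) : 2 ≤ strLen x := Nat.le_max_right _ _

/-- The string structure `S(x) = ([n], +^n, ×^n, 0, 1, <, ONE^x)`, `n = |x|`. -/
def strStructure (x : Str) : LOne.Structure (Fin (strLen x)) where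
  funMap := fun {n} f _ =>
    match f with
    | .zero => ⟨0, by have := two_le_strLen x; omega⟩
    | .one => ⟨1, by have := two_le_strLen x; omega⟩
  RelMap := fun {n} R v =>
    match R, v with
    | .one, v => x.getD (v 0).val false = true
    | .lt, v => (v 0).val < (v 1).val
    | .add, v => (v 0).val + (v 1).val = (v 2).val
    | .mul, v => (v 0).val * (v 1).val = (v 2).val

/-- `S(x) ⊨ φ`. -/
def strSat (x : Str) (φ : LOne.Sentence) : Prop :=
  letI := strStructure x
  FirstOrder.Language.Sentence.Realize (Fin (strLen x)) φ

/-- A first-order interpretation (of `L^r_ar ∪ {ONE}` in itself) of width `w`. -/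
structure Interp where
  w : ℕ
  uni : LOne.Formula (Fin w)
  addF : LOne.Formula (Fin w ⊕ Fin w ⊕ Fin w)
  mulF : LOne.Formula (Fin w ⊕ Fin w ⊕ Fin w)
  ltF : LOne.Formula (Fin w ⊕ Fin w)
  oneR : LOne.Formula (Fin w)
  zeroC : LOne.Formula (Fin w)
  oneC : LOne.Formula (Fin w)

/-- The universe defined by the interpretation `I` inside `S(x)`. -/
def Interp.Dom (I : Interp) (x : Str) : Type :=
  { a : Fin I.w → Fin (strLen x) //
      letI := strStructure x
      I.uni.Realize a }

/-- `I.Models x y` says that the interpreted structure `S(x)^I` is defined and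
    isomorphic to the string structure `S(y)`. -/
def Interp.Models (I : Interp) (x y : Str) : Prop :=
  letI := strStructure x
  ∃ e : I.Dom x ≃ Fin (strLen y),
    (∀ u v w : I.Dom x,
       I.addF.Realize (Sum.elim u.1 (Sum.elim v.1 w.1)) ↔
         (e u).val + (e v).val = (e w).val) ∧
    (∀ u v w : I.Dom x,
       I.mulF.Realize (Sum.elim u.1 (Sum.elim v.1 w.1)) ↔
         (e u).val * (e v).val = (e w).val) ∧
    (∀ u v : I.Dom x, I.ltF.Realize (Sum.elim u.1 v.1) ↔ (e u).val < (e v).val) ∧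
    (∀ u : I.Dom x, I.oneR.Realize u.1 ↔ y.getD (e u).val false = true) ∧
    (∀ u : I.Dom x, I.zeroC.Realize u.1 ↔ (e u).val = 0) ∧
    (∀ u : I.Dom x, I.oneC.Realize u.1 ↔ (e u).val = 1)

/-- `r` is `κ`-eventually definable: for some computable `h` and some
    interpretation `I`, `S(x)^I ≅ S(r(x))` whenever `|x| ≥ h(κ(x))`. -/
def EventuallyDefinable (κ : Str → ℕ) (r : Str → Str) : Prop :=
  ∃ h : ℕ → ℕ, Computable h ∧ ∃ I : Interp,
    ∀ x : Str, h (κ x) ≤ x.length → I.Models x (r x)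

/-- `r` is honest: `|r(x)| ≥ |x|^{Ω(1)}`. -/
def Honest (r : Str → Str) : Prop :=
  ∃ (c n₀ : ℕ), 0 < c ∧ ∀ x : Str, n₀ ≤ x.length → x.length ≤ (r x).length ^ c

/-- An eventually definable reduction from `(Q,κ)` to `(Q',κ')`: a reduction
    which is honest, parameterized, and `κ`-eventually definable. -/
def EDReduction (Q : Set Str) (κ : Str → ℕ) (Q' : Set Str) (κ' : Str → ℕ)
    (r : Str → Str) : Prop :=
  (∀ x : Str, x ∈ Q ↔ r x ∈ Q') ∧
  Honest r ∧
  (∃ f : ℕ → ℕ, Computable f ∧ ∀ x : Str, κ' (r x) ≤ f (κ x)) ∧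
  EventuallyDefinable κ r

/-- `(Q,κ)` is eventually definable: for some computable `h` and first-order
    sentence `φ` of `L^r_ar ∪ {ONE}`, for all `x` with `|x| ≥ h(κ(x))` (and
    `|x| ≥ 2`): `x ∈ Q ⟺ S(x) ⊨ φ`. -/
def EventuallyDefinableProblem (Q : Set Str) (κ : Str → ℕ) : Prop :=
  ∃ h : ℕ → ℕ, Computable h ∧ ∃ φ : LOne.Sentence,
    ∀ x : Str, 2 ≤ x.length → h (κ x) ≤ x.length → (x ∈ Q ↔ strSat x φ)

end PFW

namespace PFW

/-- Prepend a value to an environment. -/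
def scons {α : Type*} (a : α) (v : ℕ → α) : ℕ → α
  | 0 => a
  | n + 1 => v n

@[simp] theorem scons_zero {α : Type*} (a : α) (v : ℕ → α) : scons a v 0 = a := rfl
@[simp] theorem scons_succ {α : Type*} (a : α) (v : ℕ → α) (n : ℕ) :
    scons a v (n + 1) = v n := rfl

/-- Positive arithmetical formulas with de Bruijn variables, whose universal quantifiers are
bounded by a variable. -/
inductive Fm where
  | one (i : ℕ)
  | add (i j l : ℕ)
  | mul (i j l : ℕ)
  | and (φ ψ : Fm)
  | or (φ ψ : Fm)
  | ball (i : ℕ) (φ : Fm)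
  | ex (φ : Fm)

namespace Fm

/-- Truth of a formula when the existential quantifiers range over numbers below `W`. -/
def Sat (W : ℕ) : Fm → (ℕ → ℕ) → Prop
  | one i, v => v i = 1
  | add i j l, v => v i + v j = v l
  | mul i j l, v => v i * v j = v l
  | and φ ψ, v => φ.Sat W v ∧ ψ.Sat W v
  | or φ ψ, v => φ.Sat W v ∨ ψ.Sat W v
  | ball i φ, v => ∀ a < v i, φ.Sat W (scons a v)
  | ex φ, v => ∃ a < W, φ.Sat W (scons a v)

/-- Truth of a formula in the natural numbers. -/
def Holds : Fm → (ℕ → ℕ) → Prop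
  | one i, v => v i = 1
  | add i j l, v => v i + v j = v l
  | mul i j l, v => v i * v j = v l
  | and φ ψ, v => φ.Holds v ∧ ψ.Holds v
  | or φ ψ, v => φ.Holds v ∨ ψ.Holds v
  | ball i φ, v => ∀ a < v i, φ.Holds (scons a v)
  | ex φ, v => ∃ a, φ.Holds (scons a v)

theorem Sat.mono {φ : Fm} {W W' : ℕ} {v : ℕ → ℕ} (hW : W ≤ W') (h : φ.Sat W v) :
    φ.Sat W' v := by
  induction φ generalizing v with
  | one i => exact h
  | add i j l => exact h
  | mul i j l => exact h
  | and φ ψ ihφ ihψ => exact ⟨ihφ h.1, ihψ h.2⟩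
  | or φ ψ ihφ ihψ => exact h.imp ihφ ihψ
  | ball i φ ih => exact fun a ha => ih (h a ha)
  | ex φ ih =>
    obtain ⟨a, ha, h⟩ := h
    exact ⟨a, ha.trans_le hW, ih h⟩

theorem Sat.holds {φ : Fm} {W : ℕ} {v : ℕ → ℕ} (h : φ.Sat W v) : φ.Holds v := by
  induction φ generalizing v with
  | one i => exact h
  | add i j l => exact h
  | mul i j l => exact h
  | and φ ψ ihφ ihψ => exact ⟨ihφ h.1, ihψ h.2⟩
  | or φ ψ ihφ ihψ => exact h.imp ihφ ihψ
  | ball i φ ih => exact fun a ha => ih (h a ha)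
  | ex φ ih =>
    obtain ⟨a, _, h⟩ := h
    exact ⟨a, ih h⟩

theorem Holds.exists_sat {φ : Fm} {v : ℕ → ℕ} (h : φ.Holds v) : ∃ W, φ.Sat W v := by
  induction φ generalizing v with
  | one i => exact ⟨0, h⟩
  | add i j l => exact ⟨0, h⟩
  | mul i j l => exact ⟨0, h⟩
  | and φ ψ ihφ ihψ =>
    obtain ⟨W, hW⟩ := ihφ h.1
    obtain ⟨W', hW'⟩ := ihψ h.2
    exact ⟨max W W', hW.mono (le_max_left _ _), hW'.mono (le_max_right _ _)⟩
  | or φ ψ ihφ ihψ =>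
    rcases h with h | h
    · exact (ihφ h).imp fun _ => Or.inl
    · exact (ihψ h).imp fun _ => Or.inr
  | ball i φ ih =>
    have : ∀ a, ∃ W, a < v i → φ.Sat W (scons a v) := fun a => by
      by_cases ha : a < v i
      · exact (ih (h a ha)).imp fun _ hW _ => hW
      · exact ⟨0, fun h => absurd h ha⟩
    choose W hW using this
    exact ⟨(Finset.range (v i)).sup W, fun a ha =>
      (hW a ha).mono (Finset.le_sup (f := W) (Finset.mem_range.2 ha))⟩
  | ex φ ih =>
    obtain ⟨a, h⟩ := h
    obtain ⟨W, hW⟩ := ih h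
    exact ⟨max W (a + 1), a, by omega, hW.mono (le_max_left _ _)⟩

/-- Renaming of the free variables. -/
def subst : Fm → (ℕ → ℕ) → Fm
  | one i, σ => one (σ i)
  | add i j l, σ => add (σ i) (σ j) (σ l)
  | mul i j l, σ => mul (σ i) (σ j) (σ l)
  | and φ ψ, σ => and (φ.subst σ) (ψ.subst σ)
  | or φ ψ, σ => or (φ.subst σ) (ψ.subst σ)
  | ball i φ, σ => ball (σ i) (φ.subst (scons 0 fun n => σ n + 1))
  | ex φ, σ => ex (φ.subst (scons 0 fun n => σ n + 1))

theorem scons_comp_lift (a : ℕ) (σ v : ℕ → ℕ) :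
    (fun i => scons a v (scons 0 (fun n => σ n + 1) i)) = scons a fun i => v (σ i) := by
  funext i; cases i <;> rfl

theorem holds_subst (φ : Fm) (σ v : ℕ → ℕ) :
    (φ.subst σ).Holds v ↔ φ.Holds fun i => v (σ i) := by
  induction φ generalizing σ v with
  | one i => rfl
  | add i j l => rfl
  | mul i j l => rfl
  | and φ ψ ihφ ihψ => exact and_congr (ihφ _ _) (ihψ _ _)
  | or φ ψ ihφ ihψ => exact or_congr (ihφ _ _) (ihψ _ _)
  | ball i φ ih => simp only [subst, Holds, ih, scons_comp_lift]
  | ex φ ih => simp only [subst, Holds, ih, scons_comp_lift]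

theorem sat_subst (φ : Fm) (W : ℕ) (σ v : ℕ → ℕ) :
    (φ.subst σ).Sat W v ↔ φ.Sat W fun i => v (σ i) := by
  induction φ generalizing σ v with
  | one i => rfl
  | add i j l => rfl
  | mul i j l => rfl
  | and φ ψ ihφ ihψ => exact and_congr (ihφ _ _) (ihψ _ _)
  | or φ ψ ihφ ihψ => exact or_congr (ihφ _ _) (ihψ _ _)
  | ball i φ ih => simp only [subst, Sat, ih, scons_comp_lift]
  | ex φ ih => simp only [subst, Sat, ih, scons_comp_lift]

end Fm

/-- Relations on environments defined by a formula in the natural numbers. -/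
def Sig (R : (ℕ → ℕ) → Prop) : Prop := ∃ φ : Fm, ∀ v, φ.Holds v ↔ R v

namespace Sig

variable {R S : (ℕ → ℕ) → Prop}

theorem of_iff (hR : Sig R) (h : ∀ v, R v ↔ S v) : Sig S :=
  hR.imp fun _ hφ v => (hφ v).trans (h v)

theorem and (hR : Sig R) (hS : Sig S) : Sig fun v => R v ∧ S v := by
  obtain ⟨φ, hφ⟩ := hR
  obtain ⟨ψ, hψ⟩ := hS
  exact ⟨φ.and ψ, fun v => and_congr (hφ v) (hψ v)⟩

theorem or (hR : Sig R) (hS : Sig S) : Sig fun v => R v ∨ S v := by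
  obtain ⟨φ, hφ⟩ := hR
  obtain ⟨ψ, hψ⟩ := hS
  exact ⟨φ.or ψ, fun v => or_congr (hφ v) (hψ v)⟩

theorem subst (hR : Sig R) (σ : ℕ → ℕ) : Sig fun v => R fun i => v (σ i) := by
  obtain ⟨φ, hφ⟩ := hR
  exact ⟨φ.subst σ, fun v => (φ.holds_subst σ v).trans (hφ _)⟩

theorem ex {R : ℕ → (ℕ → ℕ) → Prop} (hR : Sig fun v => R (v 0) fun i => v (i + 1)) :
    Sig fun v => ∃ a, R a v := by
  obtain ⟨φ, hφ⟩ := hR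
  exact ⟨φ.ex, fun v => exists_congr fun a => hφ (scons a v)⟩

end Sig

/-- Functions of environments whose graph is defined by a formula. -/
def SigFun (t : (ℕ → ℕ) → ℕ) : Prop := Sig fun v => v 0 = t fun i => v (i + 1)

namespace SigFun

variable {t u : (ℕ → ℕ) → ℕ}

theorem var (i : ℕ) : SigFun fun v => v i :=
  -- `x = y` is expressed as `∃ z, z + z = z ∧ y + z = x`
  ⟨.ex (.and (.add 0 0 0) (.add (i + 2) 0 1)), fun v => by
    simp only [Fm.Holds, scons_zero, scons_succ]
    constructor
    · rintro ⟨a, h, h'⟩; omega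
    · intro h; exact ⟨0, rfl, h.symm⟩⟩

theorem add (ht : SigFun t) (hu : SigFun u) : SigFun fun v => t v + u v := by
  have h : Sig fun v => ∃ a b, (a = t fun i => v (i + 1)) ∧ (b = u fun i => v (i + 1)) ∧
      a + b = v 0 :=
    .ex <| .ex <| (ht.subst (scons 1 fun n => n + 3)).and <|
      (hu.subst (scons 0 fun n => n + 3)).and ⟨.add 1 0 2, fun _ => Iff.rfl⟩
  exact h.of_iff fun v => by simp [eq_comm]

theorem mul (ht : SigFun t) (hu : SigFun u) : SigFun fun v => t v * u v := by
  have h : Sig fun v => ∃ a b, (a = t fun i => v (i + 1)) ∧ (b = u fun i => v (i + 1)) ∧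
      a * b = v 0 :=
    .ex <| .ex <| (ht.subst (scons 1 fun n => n + 3)).and <|
      (hu.subst (scons 0 fun n => n + 3)).and ⟨.mul 1 0 2, fun _ => Iff.rfl⟩
  exact h.of_iff fun v => by simp [eq_comm]

theorem zero : SigFun fun _ => 0 :=
  ⟨.add 0 0 0, fun v => by simp [Fm.Holds]⟩

theorem one : SigFun fun _ => 1 :=
  ⟨.one 0, fun _ => Iff.rfl⟩

theorem comp_subst (ht : SigFun t) (σ : ℕ → ℕ) : SigFun fun v => t fun i => v (σ i) :=
  Sig.subst ht (scons 0 fun n => σ n + 1)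

end SigFun

namespace Sig

variable {t u : (ℕ → ℕ) → ℕ}

/-- Substitution of a definable function for the first variable. -/
theorem bind {R : ℕ → (ℕ → ℕ) → Prop} (hR : Sig fun v => R (v 0) fun i => v (i + 1))
    (ht : SigFun t) : Sig fun v => R (t v) v :=
  (ht.and hR).ex (R := fun a v => a = t v ∧ R a v) |>.of_iff fun v => by simp

theorem comp₂ {R : ℕ → ℕ → Prop} (hR : Sig fun v => R (v 0) (v 1)) (ht : SigFun t)
    (hu : SigFun u) : Sig fun v => R (t v) (u v) :=
  bind (R := fun a v => R a (u v)) (bind (R := fun b v => R (v 0) b)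
    (hR.subst (scons 1 fun _ => 0)) (hu.comp_subst (· + 1))) ht

theorem eq (ht : SigFun t) (hu : SigFun u) : Sig fun v => t v = u v :=
  comp₂ (R := fun a b => a = b) (SigFun.var 0) ht hu

theorem lt (ht : SigFun t) (hu : SigFun u) : Sig fun v => t v < u v :=
  (ex (R := fun a v => t v + a + 1 = u v) (eq (((ht.comp_subst (· + 1)).add (.var 0)).add .one)
    (hu.comp_subst (· + 1)))).of_iff fun v =>
      ⟨fun ⟨a, h⟩ => by omega, fun h => ⟨u v - t v - 1, by omega⟩⟩

theorem ball {R : ℕ → (ℕ → ℕ) → Prop} (hR : Sig fun v => R (v 0) fun i => v (i + 1))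
    (ht : SigFun t) : Sig fun v => ∀ a < t v, R a v := by
  obtain ⟨φ, hφ⟩ := hR.subst (scons 0 fun n => n + 2)
  exact bind (R := fun b v => ∀ a < b, R a v)
    ⟨.ball 0 φ, fun v => forall₂_congr fun a _ => hφ (scons a v)⟩ ht

end Sig

/-- Partial functions whose graph is defined by a formula. -/
def SigGraph (f : ℕ →. ℕ) : Prop := Sig fun v => v 1 ∈ f (v 0)

theorem SigGraph.mem {f : ℕ →. ℕ} (hf : SigGraph f) {t u : (ℕ → ℕ) → ℕ} (ht : SigFun t)
    (hu : SigFun u) : Sig fun v => u v ∈ f (t v) :=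
  Sig.comp₂ (R := fun a b => b ∈ f a) hf ht hu

theorem SigFun.pair {t u : (ℕ → ℕ) → ℕ} (ht : SigFun t) (hu : SigFun u) :
    SigFun fun v => Nat.pair (t v) (u v) := by
  have h : Sig fun v => (v 1 < v 2 ∧ v 0 = v 2 * v 2 + v 1) ∨
      (v 2 < v 1 + 1 ∧ v 0 = v 1 * v 1 + v 1 + v 2) :=
    ((Sig.lt (.var 1) (.var 2)).and (.eq (.var 0) (((SigFun.var 2).mul (.var 2)).add (.var 1)))).or
    ((Sig.lt (.var 2) ((SigFun.var 1).add .one)).and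
      (.eq (.var 0) ((((SigFun.var 1).mul (.var 1)).add (.var 1)).add (.var 2))))
  have h' : Sig fun v => v 2 = Nat.pair (v 0) (v 1) :=
    (h.subst (scons 2 (scons 0 fun _ => 1))).of_iff fun v => by
      simp only [scons, Nat.pair]
      split_ifs <;> simp <;> omega
  refine Sig.bind (R := fun a v => v 0 = Nat.pair a (u fun i => v (i + 1))) ?_
    (ht.comp_subst (· + 1))
  refine Sig.bind (R := fun b v => v 1 = Nat.pair (v 0) b) ?_ (hu.comp_subst (· + 2))
  exact h'.subst (scons 1 (scons 0 fun _ => 2))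

theorem Sig.beta {t u w : (ℕ → ℕ) → ℕ} (ht : SigFun t) (hu : SigFun u) (hw : SigFun w) :
    Sig fun v => Nat.beta (t v) (u v) = w v := by
  have h : Sig fun v => ∃ a b q, t v = Nat.pair a b ∧ w v < (u v + 1) * b + 1 ∧
      a = q * ((u v + 1) * b + 1) + w v := by
    have hm : SigFun fun v => (u (fun i => v (i + 3)) + 1) * v 1 + 1 :=
      (((hu.comp_subst (· + 3)).add .one).mul (.var 1)).add .one
    exact .ex <| .ex <| .ex <| (Sig.eq (ht.comp_subst (· + 3)) (.pair (.var 2) (.var 1))).and <|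
      (Sig.lt (hw.comp_subst (· + 3)) hm).and <|
      .eq (.var 2) (((SigFun.var 0).mul hm).add (hw.comp_subst (· + 3)))
  refine h.of_iff fun v => ?_
  constructor
  · rintro ⟨a, b, q, h₁, h₂, h₃⟩
    simp only [Nat.beta, h₁, Nat.unpair_pair]
    rw [h₃, Nat.mul_add_mod', Nat.mod_eq_of_lt h₂]
  · intro h
    refine ⟨(t v).unpair.1, (t v).unpair.2, (t v).unpair.1 / ((u v + 1) * (t v).unpair.2 + 1),
      (Nat.pair_unpair _).symm, ?_, ?_⟩
    · rw [← h]; exact Nat.mod_lt _ (Nat.succ_pos _)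
    · rw [← h]; exact (Nat.div_add_mod' _ _).symm

theorem exists_beta (g : ℕ → ℕ) (n : ℕ) : ∃ s, ∀ i < n, Nat.beta s i = g i := by
  refine ⟨Nat.unbeta ((List.range n).map g), fun i hi => ?_⟩
  simpa using Nat.beta_unbeta_coe ((List.range n).map g) ⟨i, by simpa using hi⟩

theorem mem_rec_iff (f g : ℕ →. ℕ) (a n y : ℕ) :
    y ∈ (n.rec (f a) fun m IH => IH.bind fun i => g (Nat.pair a (Nat.pair m i)) : Part ℕ) ↔
      ∃ s, Nat.beta s 0 ∈ f a ∧
        (∀ m < n, Nat.beta s (m + 1) ∈ g (Nat.pair a (Nat.pair m (Nat.beta s m)))) ∧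
        Nat.beta s n = y := by
  set F : ℕ → Part ℕ := fun n => n.rec (f a) fun m IH =>
    IH.bind fun i => g (Nat.pair a (Nat.pair m i)) with hF
  change y ∈ F n ↔ _
  have hs (m : ℕ) : F (m + 1) = (F m).bind fun i => g (Nat.pair a (Nat.pair m i)) := rfl
  constructor
  · intro hy
    have : ∃ e : ℕ → ℕ, e 0 ∈ f a ∧
        (∀ m < n, e (m + 1) ∈ g (Nat.pair a (Nat.pair m (e m)))) ∧ e n = y := by
      clear_value F
      induction n generalizing y with
      | zero =>
        have h0 : F 0 = f a := by simp [hF]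
        exact ⟨fun _ => y, h0 ▸ hy, fun m hm => absurd hm (Nat.not_lt_zero _), rfl⟩
      | succ n ih =>
        rw [hs] at hy
        obtain ⟨i, hi, hy⟩ := Part.mem_bind_iff.1 hy
        obtain ⟨e, h0, h1, h2⟩ := ih i hi
        refine ⟨fun m => if m = n + 1 then y else e m, by simpa using h0, fun m hm => ?_, by simp⟩
        rcases Nat.lt_succ_iff_lt_or_eq.1 hm with hm | rfl
        · simpa [show m ≠ n by omega, show m ≠ n + 1 by omega] using h1 m hm
        · simpa [h2] using hy
    obtain ⟨e, h0, h1, h2⟩ := this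
    obtain ⟨s, hs⟩ := exists_beta e (n + 1)
    refine ⟨s, by rwa [hs 0 (by omega)], fun m hm => ?_, by rwa [hs n (by omega)]⟩
    rw [hs _ (by omega), hs _ (by omega)]
    exact h1 m hm
  · rintro ⟨s, h0, h1, rfl⟩
    have : ∀ m ≤ n, Nat.beta s m ∈ F m := fun m hm => by
      induction m with
      | zero => exact h0
      | succ m ih =>
        rw [hs]
        exact Part.mem_bind_iff.2 ⟨_, ih (by omega), h1 m (by omega)⟩
    exact this n le_rfl

theorem sigGraph_of_partrec {f : ℕ →. ℕ} (hf : Nat.Partrec f) : SigGraph f := by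
  induction hf with
  | zero => exact (Sig.eq (.var 1) .zero).of_iff fun v => by simp [pure, PFun.pure]
  | succ =>
    exact (Sig.eq (.var 1) ((SigFun.var 0).add .one)).of_iff fun v => by simp
  | left =>
    refine (Sig.ex (R := fun b v => v 0 = Nat.pair (v 1) b)
      (.eq (.var 1) (.pair (.var 2) (.var 0)))).of_iff fun v => ?_
    simp only [PFun.coe_val, Part.mem_some_iff]
    constructor
    · rintro ⟨b, h⟩; simp [h]
    · intro h; exact ⟨(v 0).unpair.2, by simp [h]⟩
  | right =>
    refine (Sig.ex (R := fun b v => v 0 = Nat.pair b (v 1))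
      (.eq (.var 1) (.pair (.var 0) (.var 2)))).of_iff fun v => ?_
    simp only [PFun.coe_val, Part.mem_some_iff]
    constructor
    · rintro ⟨b, h⟩; simp [h]
    · intro h; exact ⟨(v 0).unpair.1, by simp [h]⟩
  | @pair f g _ _ hf hg =>
    refine (Sig.ex (R := fun a v => ∃ b, a ∈ f (v 0) ∧ b ∈ g (v 0) ∧ v 1 = Nat.pair a b)
      (Sig.ex (R := fun b v => v 0 ∈ f (v 1) ∧ b ∈ g (v 1) ∧ v 2 = Nat.pair (v 0) b) ?_)).of_iff
      fun v => ?_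
    · exact (hf.mem (.var 2) (.var 1)).and <| (hg.mem (.var 2) (.var 0)).and <|
        .eq (.var 3) (.pair (.var 1) (.var 0))
    · simp [Seq.seq, eq_comm]
  | @comp f g _ _ hf hg =>
    refine (Sig.ex (R := fun b v => b ∈ g (v 0) ∧ v 1 ∈ f b)
      ((hg.mem (.var 1) (.var 0)).and (hf.mem (.var 0) (.var 2)))).of_iff fun v => ?_
    exact Part.mem_bind_iff.symm
  | @prec f g _ _ hf hg =>
    have hm : Sig fun v => ∃ u w, Nat.beta (v 1) (v 0) = u ∧ Nat.beta (v 1) (v 0 + 1) = w ∧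
        w ∈ g (Nat.pair (v 3) (Nat.pair (v 0) u)) :=
      .ex <| .ex <| (Sig.beta (.var 3) (.var 2) (.var 1)).and <|
        (Sig.beta (.var 3) ((SigFun.var 2).add .one) (.var 0)).and <|
        hg.mem (.pair (.var 5) (.pair (.var 2) (.var 1))) (.var 0)
    have h0 : Sig fun v => ∃ u, Nat.beta (v 0) 0 = u ∧ u ∈ f (v 2) :=
      .ex <| (Sig.beta (.var 1) .zero (.var 0)).and (hf.mem (.var 3) (.var 0))
    have h : Sig fun v => ∃ a n s, v 0 = Nat.pair a n ∧ (∃ u, Nat.beta s 0 = u ∧ u ∈ f a) ∧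
        (∀ m < n, ∃ u w, Nat.beta s m = u ∧ Nat.beta s (m + 1) = w ∧
          w ∈ g (Nat.pair a (Nat.pair m u))) ∧ Nat.beta s n = v 1 :=
      .ex <| .ex <| .ex <| (Sig.eq (.var 3) (.pair (.var 2) (.var 1))).and <| h0.and <|
        .and (.ball (R := fun m v => ∃ u w, Nat.beta (v 0) m = u ∧ Nat.beta (v 0) (m + 1) = w ∧
          w ∈ g (Nat.pair (v 2) (Nat.pair m u))) hm (.var 1)) <|
        .beta (.var 0) (.var 1) (.var 4)
    refine h.of_iff fun v => ?_
    have := mem_rec_iff f g (v 0).unpair.1 (v 0).unpair.2 (v 1)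
    simp only [Nat.unpaired]
    refine Iff.trans ?_ this.symm
    constructor
    · rintro ⟨a, n, s, h, h0, h1, h2⟩
      refine ⟨s, ?_⟩
      simpa [h, h2] using And.intro h0 h1
    · rintro ⟨s, h0, h1, h2⟩
      exact ⟨_, _, s, (Nat.pair_unpair _).symm, ⟨_, rfl, h0⟩,
        fun m hm => ⟨_, _, rfl, rfl, h1 m hm⟩, h2⟩
  | @rfind f _ hf =>
    have h : Sig fun v => 0 ∈ f (Nat.pair (v 0) (v 1)) ∧
        ∀ m < v 1, ∃ z, z + 1 ∈ f (Nat.pair (v 0) m) :=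
      (hf.mem (.pair (.var 0) (.var 1)) .zero).and <|
        .ball (R := fun m v => ∃ z, z + 1 ∈ f (Nat.pair (v 0) m))
          (.ex (hf.mem (.pair (.var 2) (.var 1)) ((SigFun.var 0).add .one))) (.var 1)
    refine h.of_iff fun v => ?_
    refine Iff.trans ?_ Nat.mem_rfind.symm
    simp only [Part.map_eq_map, Part.mem_map_iff, decide_eq_true_eq, decide_eq_false_iff_not]
    refine and_congr (by simp) (forall₂_congr fun m _ => ?_)
    constructor
    · rintro ⟨z, hz⟩; exact ⟨z + 1, hz, by simp⟩
    · rintro ⟨z, hz, h⟩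
      obtain ⟨z, rfl⟩ := Nat.exists_eq_succ_of_ne_zero h
      exact ⟨z, hz⟩

/-- A formula, with its only free variable in every position of the environment, such that
truth at `n` relative to the bound `W` is monotone in `W`, antitone in `n`, eventually true, and
forces `W` to exceed `f (n ^ 2)`. -/
theorem exists_dominating_formula {f : ℕ → ℕ} (hf : Computable f) :
    ∃ φ : Fm, (∀ n, ∃ W, φ.Sat W fun _ => n) ∧
      (∀ n W, (φ.Sat W fun _ => n) → f (n ^ 2) < W) ∧
      ∀ m n W, m ≤ n → (φ.Sat W fun _ => n) → φ.Sat W fun _ => m := by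
  have hG : Sig fun v => v 0 ∈ (f : ℕ →. ℕ) (v 1 * v 1) :=
    (sigGraph_of_partrec (Partrec.nat_iff.1 hf.partrec)).mem ((SigFun.var 1).mul (.var 1)) (.var 0)
  obtain ⟨ψ, hψ⟩ := hG
  refine ⟨.ex (.and (.ex (.and (.one 0) (.add 2 0 1)))
    (.ball 0 (.ex (ψ.subst (scons 0 fun _ => 1))))), fun n => ?_, fun n W => ?_,
    fun m n W hmn => ?_⟩
  · apply Fm.Holds.exists_sat
    refine ⟨n + 1, ⟨1, rfl, rfl⟩, fun a _ => ⟨f (a * a), ?_⟩⟩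
    rw [Fm.holds_subst, hψ]
    simp [scons]
  · rintro ⟨b, hb, ⟨u, -, hu, hn⟩, h⟩
    change u = 1 at hu
    change n + u = b at hn
    obtain ⟨y, hy, h⟩ := h n (by simp [scons]; omega)
    have := h.holds
    rw [Fm.holds_subst, hψ] at this
    simp only [scons, PFun.coe_val, Part.mem_some_iff] at this
    rw [pow_two, ← this]
    exact hy
  · rintro ⟨b, hb, ⟨u, hu', hu, hn⟩, h⟩
    change u = 1 at hu
    change n + u = b at hn
    refine ⟨m + 1, by omega, ⟨u, hu', hu, congrArg (m + ·) hu⟩, fun a ha => ?_⟩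
    change a < m + 1 at ha
    obtain ⟨y, hy, h⟩ := h a (by simp [scons]; omega)
    refine ⟨y, hy, ?_⟩
    rw [Fm.sat_subst] at h ⊢
    convert h using 2 with i
    rcases i with _ | i <;> rfl

section StringStructures

open FirstOrder Language

/-- Relations on environments over string structures defined by a first-order formula. -/
def StrDef (A : (x : Str) → (ℕ → Fin (strLen x)) → Prop) : Prop :=
  ∃ φ : LOne.Formula ℕ, ∀ x v, (letI := strStructure x; φ.Realize v) ↔ A x v

namespace StrDef

variable {A B : (x : Str) → (ℕ → Fin (strLen x)) → Prop}

theorem of_iff (hA : StrDef A) (h : ∀ x v, A x v ↔ B x v) : StrDef B :=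
  hA.imp fun _ hφ x v => (hφ x v).trans (h x v)

theorem not (hA : StrDef A) : StrDef fun x v => ¬ A x v := by
  obtain ⟨φ, hφ⟩ := hA
  refine ⟨∼φ, fun x v => ?_⟩
  let := strStructure x
  exact Formula.realize_not.trans (not_congr (hφ x v))

theorem and (hA : StrDef A) (hB : StrDef B) : StrDef fun x v => A x v ∧ B x v := by
  obtain ⟨φ, hφ⟩ := hA
  obtain ⟨ψ, hψ⟩ := hB
  refine ⟨φ ⊓ ψ, fun x v => ?_⟩
  let := strStructure x
  exact Formula.realize_inf.trans (and_congr (hφ x v) (hψ x v))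

theorem or (hA : StrDef A) (hB : StrDef B) : StrDef fun x v => A x v ∨ B x v := by
  obtain ⟨φ, hφ⟩ := hA
  obtain ⟨ψ, hψ⟩ := hB
  refine ⟨φ ⊔ ψ, fun x v => ?_⟩
  let := strStructure x
  exact Formula.realize_sup.trans (or_congr (hφ x v) (hψ x v))

theorem ex {A : (x : Str) → Fin (strLen x) → (ℕ → Fin (strLen x)) → Prop}
    (hA : StrDef fun x v => A x (v 0) fun i => v (i + 1)) : StrDef fun x v => ∃ a, A x a v := by
  obtain ⟨φ, hφ⟩ := hA
  refine ⟨(φ.relabel (scons (Sum.inr ()) Sum.inl)).iExs Unit, fun x v => ?_⟩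
  let := strStructure x
  rw [Formula.realize_iExs]
  simp only [Formula.realize_relabel]
  have key (i : Unit → Fin (strLen x)) :
      Sum.elim v i ∘ scons (Sum.inr ()) Sum.inl = scons (i ()) v := by
    funext n; cases n <;> rfl
  simp only [key]
  constructor
  · rintro ⟨i, hi⟩; exact ⟨i (), (hφ x _).1 hi⟩
  · rintro ⟨a, ha⟩; exact ⟨fun _ => a, (hφ x (scons a v)).2 ha⟩

theorem all {A : (x : Str) → Fin (strLen x) → (ℕ → Fin (strLen x)) → Prop}
    (hA : StrDef fun x v => A x (v 0) fun i => v (i + 1)) : StrDef fun x v => ∀ a, A x a v :=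
  (ex (A := fun x a v => ¬ A x a v) hA.not).not.of_iff fun x v => by simp

theorem lt (i j : ℕ) : StrDef fun _ v => (v i : ℕ) < v j :=
  ⟨Relations.formula (L := LOne) LOneRel.lt (fun k : Fin 2 => Term.var (![i, j] k)), fun x v => by
    let := strStructure x
    exact Formula.realize_rel⟩

theorem add (i j l : ℕ) : StrDef fun _ v => (v i : ℕ) + v j = v l :=
  ⟨Relations.formula (L := LOne) LOneRel.add (fun k : Fin 3 => Term.var (![i, j, l] k)),
    fun x v => by
    let := strStructure x
    exact Formula.realize_rel⟩

theorem mul (i j l : ℕ) : StrDef fun _ v => (v i : ℕ) * v j = v l :=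
  ⟨Relations.formula (L := LOne) LOneRel.mul (fun k : Fin 3 => Term.var (![i, j, l] k)),
    fun x v => by
    let := strStructure x
    exact Formula.realize_rel⟩

theorem bit (i : ℕ) : StrDef fun x v => x.getD (v i) false = true :=
  ⟨Relations.formula (L := LOne) LOneRel.one (fun _ : Fin 1 => Term.var i), fun x v => by
    let := strStructure x
    exact Formula.realize_rel⟩

theorem one (i : ℕ) : StrDef fun _ v => (v i : ℕ) = 1 :=
  ⟨Term.equal (L := LOne) (Term.var i) (Constants.term (L := LOne) LOneFun.one), fun x v => by
    let := strStructure x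
    exact Formula.realize_equal.trans Fin.ext_iff⟩

theorem sat (φ : Fm) (w : ℕ) (ρ : ℕ → ℕ) : StrDef fun _ v => φ.Sat (v w) fun i => v (ρ i) := by
  have key {k : ℕ} (a : Fin k) (v : ℕ → Fin k) (ρ : ℕ → ℕ) :
      (fun i => ((scons a v (scons 0 (fun n => ρ n + 1) i) : Fin k) : ℕ)) =
        scons (a : ℕ) fun i => v (ρ i) := by
    funext i; cases i <;> rfl
  have step (φ : Fm) (w : ℕ) (ρ : ℕ → ℕ)
      (ih : ∀ w ρ, StrDef fun _ v => φ.Sat (v w) fun i => v (ρ i)) :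
      StrDef fun x v => φ.Sat (v (w + 1)) (scons (v 0) fun i => v (ρ i + 1)) :=
    (ih (w + 1) (scons 0 fun n => ρ n + 1)).of_iff fun x v => by
      have := key (v 0) (fun i => v (i + 1)) ρ
      rw [← this]
      refine iff_of_eq (congrArg _ (funext fun i => ?_))
      rcases i with _ | i <;> rfl
  induction φ generalizing w ρ with
  | one i => exact one _
  | add i j l => exact add _ _ _
  | mul i j l => exact mul _ _ _
  | and φ ψ ihφ ihψ => exact (ihφ _ _).and (ihψ _ _)
  | or φ ψ ihφ ihψ => exact (ihφ _ _).or (ihψ _ _)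
  | ball i φ ih =>
    refine (ex (A := fun x a v => (a : ℕ) < v (ρ i) ∧ ¬ φ.Sat (v w) (scons a fun i => v (ρ i)))
      ((lt _ _).and (step φ w ρ ih).not)).not.of_iff fun x v => ?_
    simp only [not_exists, not_and, not_not, Fm.Sat]
    exact ⟨fun h a ha => h ⟨a, ha.trans (v (ρ i)).2⟩ ha, fun h a ha => h a ha⟩
  | ex φ ih =>
    refine (ex (A := fun x a v => (a : ℕ) < v w ∧ φ.Sat (v w) (scons a fun i => v (ρ i)))
      ((lt _ _).and (step φ w ρ ih))).of_iff fun x v => ?_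
    simp only [Fm.Sat]
    exact ⟨fun ⟨a, ha, h⟩ => ⟨a, ha, h⟩, fun ⟨a, ha, h⟩ => ⟨⟨a, ha.trans (v w).2⟩, ha, h⟩⟩

theorem exists_sentence (hA : StrDef A) :
    ∃ φ : LOne.Sentence, ∀ x, strSat x φ ↔ ∃ a, A x fun _ => a := by
  obtain ⟨φ, hφ⟩ := hA
  refine ⟨Formula.iExs (α := Empty) Unit (φ.relabel fun _ => Sum.inr ()), fun x => ?_⟩
  let := strStructure x
  simp only [strSat, Sentence.Realize]
  rw [Formula.realize_iExs]
  simp only [Formula.realize_relabel]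
  exact ⟨fun ⟨i, hi⟩ => ⟨i (), (hφ x _).1 hi⟩, fun ⟨a, ha⟩ => ⟨fun _ => a, (hφ x _).2 ha⟩⟩

theorem exists_formula (hA : StrDef A) :
    ∃ φ : LOne.Formula (Fin 1), ∀ x a,
      (letI := strStructure x; φ.Realize fun _ : Fin 1 => a) ↔ A x fun _ => a := by
  obtain ⟨φ, hφ⟩ := hA
  refine ⟨φ.relabel fun _ => 0, fun x a => ?_⟩
  let := strStructure x
  exact Formula.realize_relabel.trans (hφ x _)

end StrDef

/-- The universe of the string structure has `w + n + 2` elements, where `n` is the value of the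
variables and `w` is least such that `φ` is true at `n` relative to the bound `w`. -/
theorem StrDef.length_eq_find (φ : Fm) (μ : ℕ → ℕ)
    (hμ : ∀ n w, μ n = w ↔ (φ.Sat w fun _ => n) ∧ ∀ w' < w, ¬ φ.Sat w' fun _ => n) :
    StrDef fun x v => strLen x = μ (v 0) + v 0 + 2 := by
  have hmin : StrDef fun x v => ∀ a : Fin (strLen x), ¬ ((a : ℕ) < v 0 ∧ φ.Sat a fun _ => v 4) :=
    .all (((lt 0 1).and (sat φ 0 fun _ => 5)).not)
  have h : StrDef fun x v => ∃ u last s w : Fin (strLen x), (u : ℕ) = 1 ∧ (¬ ∃ a, last < a) ∧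
      (w + v 0 : ℕ) = s ∧ (s + u : ℕ) = last ∧ (φ.Sat w fun _ => v 0) ∧
      ∀ a : Fin (strLen x), ¬ ((a : ℕ) < w ∧ φ.Sat a fun _ => v 0) :=
    .ex <| .ex <| .ex <| .ex <| (one 3).and <| .and (.not (.ex (lt 3 0))) <|
      (add 0 4 1).and <| (add 1 3 2).and <| (sat φ 0 fun _ => 4).and hmin
  refine h.of_iff fun x v => ?_
  have h2 := two_le_strLen x
  constructor
  · rintro ⟨u, last, s, w, hu, hl, hs, hl', hw, hmin⟩
    have : (last : ℕ) + 1 = strLen x := by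
      by_contra hne
      exact hl ⟨⟨last + 1, by omega⟩, Fin.lt_def.2 (Nat.lt_succ_self _)⟩
    have : μ (v 0) = w :=
      (hμ _ _).2 ⟨hw, fun w' hw' h => hmin ⟨w', hw'.trans w.2⟩ ⟨hw', h⟩⟩
    omega
  · intro h
    obtain ⟨h₁, h₂⟩ := (hμ (v 0) _).1 rfl
    refine ⟨⟨1, by omega⟩, ⟨strLen x - 1, by omega⟩, ⟨strLen x - 2, by omega⟩,
      ⟨μ (v 0), by omega⟩, rfl, ?_, ?_, ?_, h₁, fun a ha => h₂ a ha.1 ha.2⟩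
    · rintro ⟨a, ha⟩
      have := a.2
      rw [Fin.lt_def] at ha
      simp only at ha
      omega
    · simp only; omega
    · simp only; omega

end StringStructures

/-- Functions on the natural numbers that are bounded by a polynomial. -/
def PolyBounded (g : ℕ → ℕ) : Prop := ∃ c, ∀ n, g n ≤ c * (n + 1) ^ c

namespace PolyBounded

variable {g g' : ℕ → ℕ}

theorem const (k : ℕ) : PolyBounded fun _ => k :=
  ⟨k, fun n => Nat.le_mul_of_pos_right _ (by positivity)⟩

theorem id : PolyBounded fun n => n :=
  ⟨1, fun n => by simp⟩

theorem add (hg : PolyBounded g) (hg' : PolyBounded g') : PolyBounded fun n => g n + g' n := by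
  obtain ⟨c, hc⟩ := hg
  obtain ⟨c', hc'⟩ := hg'
  refine ⟨c + c', fun n => ?_⟩
  rw [add_mul]
  exact add_le_add ((hc n).trans (by gcongr <;> omega)) ((hc' n).trans (by gcongr <;> omega))

theorem mul (hg : PolyBounded g) (hg' : PolyBounded g') : PolyBounded fun n => g n * g' n := by
  obtain ⟨c, hc⟩ := hg
  obtain ⟨c', hc'⟩ := hg'
  refine ⟨c * c' + c + c', fun n => (Nat.mul_le_mul (hc n) (hc' n)).trans ?_⟩
  rw [mul_mul_mul_comm, ← pow_add]
  gcongr <;> omega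

end PolyBounded

/-- Programs for machines with counters: `ite i P Q` decrements counter `i` and runs `P` if the
counter is nonzero and runs `Q` otherwise; `loop i P` decrements counter `i` and runs `P` as long
as the counter is nonzero. -/
inductive Prog where
  | skip
  | inc (i : ℕ)
  | seq (P Q : Prog)
  | ite (i : ℕ) (P Q : Prog)
  | loop (i : ℕ) (P : Prog)

/-- Running the program on the first store produces the second store in at most the given number of
steps. -/
inductive Exec : Prog → (ℕ → ℕ) → (ℕ → ℕ) → ℕ → Prop
  | skip s : Exec .skip s s 0
  | inc i s : Exec (.inc i) s (Function.update s i (s i + 1)) 1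
  | seq {P Q s s' s'' t t'} : Exec P s s' t → Exec Q s' s'' t' → Exec (.seq P Q) s s'' (t + t')
  | ite_zero {i P Q s s' t} : s i = 0 → Exec Q s s' t → Exec (.ite i P Q) s s' (t + 1)
  | ite_pos {i P Q s s' t k} : s i = k + 1 → Exec P (Function.update s i k) s' t →
      Exec (.ite i P Q) s s' (t + 1)
  | loop_zero {i P s} : s i = 0 → Exec (.loop i P) s s 1
  | loop_pos {i P s s' s'' t t' k} : s i = k + 1 → Exec P (Function.update s i k) s' t →
      Exec (.loop i P) s' s'' t' → Exec (.loop i P) s s'' (t + t' + 1)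
  | mono {P s s' t t'} : Exec P s s' t → t ≤ t' → Exec P s s' t'

namespace Exec

theorem of_eq {P : Prog} {s s₁ s' : ℕ → ℕ} {t t' : ℕ} (h : Exec P s s₁ t) (hs : s₁ = s')
    (ht : t ≤ t') : Exec P s s' t' :=
  hs ▸ h.mono ht

/-- A loop in which `S k` is the store when `k` iterations remain. -/
theorem loop {i : ℕ} {P : Prog} {T : ℕ} (n : ℕ) (S : ℕ → ℕ → ℕ) (hS : ∀ k ≤ n, S k i = k)
    (hP : ∀ k < n, Exec P (Function.update (S (k + 1)) i k) (S k) T) :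
    Exec (.loop i P) (S n) (S 0) (n * (T + 1) + 1) := by
  induction n with
  | zero => exact (loop_zero (hS 0 le_rfl)).mono (by simp)
  | succ n ih =>
    refine ((loop_pos (hS _ le_rfl) (hP n n.lt_succ_self)
      (ih (fun k hk => hS k (by omega)) fun k hk => hP k (by omega)))).mono ?_
    rw [Nat.add_mul]; omega

end Exec

namespace Prog

/-- Set counter `i` to zero. -/
def clear (i : ℕ) : Prog := loop i skip

/-- Negate the truth value in counter `i`. -/
def flip (i : ℕ) : Prog := ite i skip (inc i)

/-- Add counter `i` to counter `j`, using the auxiliary counter `k`. -/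
def copyAdd (i j k : ℕ) : Prog := seq (loop i (seq (inc j) (inc k))) (loop k (inc i))

/-- Set counter `d` to the truth value of the equality of counters `d + 1` and `d + 2`, which are
cleared. -/
def eq (d : ℕ) : Prog :=
  seq (loop (d + 1) (ite (d + 2) skip (inc (d + 3))))
    (ite (d + 3) (clear (d + 3)) (ite (d + 2) (clear (d + 2)) (inc d)))

/-- Set counter `d` to the truth value of the statement that `P` returns a true value in counter
`d + 3` for some value of counter `d + 2` below the value of counter `i`. -/
def anyBelow (i d : ℕ) (P : Prog) : Prog :=
  seq (copyAdd i (d + 1) (d + 2)) <|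
  seq (loop (d + 1) (seq P (seq (ite (d + 3) (inc d) skip) (inc (d + 2))))) <|
  seq (clear (d + 2)) (ite d (seq (clear d) (inc d)) skip)

end Prog

/-- The store `s` with the counters from `d` to `d + 3` replaced. -/
def block (s : ℕ → ℕ) (d a b c e : ℕ) : ℕ → ℕ := fun j =>
  if j = d then a else if j = d + 1 then b else if j = d + 2 then c else if j = d + 3 then e
  else s j

/-- The truth value of a proposition. -/
noncomputable def truth (p : Prop) : ℕ := open Classical in if p then 1 else 0

theorem truth_true {p : Prop} (h : p) : truth p = 1 := by simp [truth, h]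
theorem truth_false {p : Prop} (h : ¬ p) : truth p = 0 := by simp [truth, h]

namespace Exec

open Prog

theorem clear (i : ℕ) (s : ℕ → ℕ) : Exec (clear i) s (Function.update s i 0) (s i + 1) := by
  have := loop (P := .skip) (T := 0) (s i) (fun k => Function.update s i k) (i := i) (by simp)
    fun k _ => by simpa using Exec.skip _
  simpa [Prog.clear] using this

theorem flip {i : ℕ} {s : ℕ → ℕ} {p : Prop} (h : s i = truth p) :
    Exec (flip i) s (Function.update s i (truth (¬ p))) 2 := by
  by_cases hp : p
  · rw [truth_false (not_not.2 hp)]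
    rw [truth_true hp] at h
    exact (ite_pos h (skip _)).mono (by omega)
  · rw [truth_true hp]
    rw [truth_false hp] at h
    have := inc i s
    rw [h] at this
    exact ite_zero h this

theorem copyAdd {i j k : ℕ} (hij : i ≠ j) (hik : i ≠ k) (hjk : j ≠ k) {s : ℕ → ℕ} (hk : s k = 0) :
    Exec (copyAdd i j k) s (Function.update s j (s j + s i)) (5 * s i + 2) := by
  let u (a b c : ℕ) := Function.update (Function.update (Function.update s i a) j b) k c
  have h₁ := loop (P := .seq (.inc j) (.inc k)) (T := 2) (s i)
    (fun m => u m (s j + (s i - m)) (s i - m)) (i := i)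
    (fun m _ => by simp [u, hij, hik]) fun m hm => by
      have h := (inc j
        (Function.update (u (m + 1) (s j + (s i - (m + 1))) (s i - (m + 1))) i m)).seq
        (inc k _)
      convert h using 1
      funext x
      simp only [u, Function.update_apply]
      grind
  have h₂ := loop (P := .inc i) (T := 1) (s i) (fun m => u (s i - m) (s j + s i) m) (i := k)
    (fun m _ => by simp [u]) fun m hm => by
      have h := inc i (Function.update (u (s i - (m + 1)) (s j + s i) (m + 1)) k m)
      convert h using 1
      funext x
      simp only [u, Function.update_apply]
      grind
  have h := (h₁.seq (s'' := u (s i - 0) (s j + s i) 0) (by convert h₂ using 1; simp)).mono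
    (t' := 5 * s i + 2) (by omega)
  unfold Prog.copyAdd
  convert h using 1 <;>
  · funext x
    simp only [u, Function.update_apply]
    grind

theorem eq (s : ℕ → ℕ) (d x y : ℕ) :
    Exec (eq d) (block s d 0 x y 0) (block s d (truth (x = y)) 0 0 0) (4 * x + y + 5) := by
  have h₁ := loop (P := .ite (d + 2) .skip (.inc (d + 3))) (T := 2) x
    (fun m => block s d 0 m (y - (x - m)) (x - m - y)) (i := d + 1)
    (fun m _ => by simp [block]) fun m hm => by
      rcases hz : y - (x - (m + 1)) with _ | z
      · have h := ite_zero (i := d + 2) (P := .skip) (s := Function.update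
          (block s d 0 (m + 1) 0 (x - (m + 1) - y)) (d + 1) m)
          (by simp [block]) (inc (d + 3) _)
        convert h using 1
        funext j
        simp only [block, Function.update_apply]
        grind
      · have h := (ite_pos (i := d + 2) (Q := .inc (d + 3)) (s := Function.update
          (block s d 0 (m + 1) (z + 1) (x - (m + 1) - y)) (d + 1) m) (k := z)
          (by simp [block]) (skip _)).mono (t' := 2) (by omega)
        convert h using 1
        funext j
        simp only [block, Function.update_apply]
        grind
  simp only [Nat.sub_self, Nat.sub_zero, Nat.zero_sub] at h₁
  refine (h₁.seq (t' := x + y + 4) ?_).mono (by omega)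
  rcases hx : x - y with _ | z
  · refine (ite_zero (by simp [block]) (t := x + y + 3) ?_).mono (by omega)
    rcases hy : y - x with _ | z
    · rw [truth_true (by omega)]
      refine (ite_zero (by simp [block]) (t := 1) ?_).mono (by omega)
      convert inc d _ using 1
      funext j
      simp only [block, Function.update_apply]
      grind
    · rw [truth_false (by omega)]
      refine (ite_pos (k := z) (by simp [block]) (clear (d + 2) _)).of_eq ?_ (by simp; omega)
      funext j
      simp only [block, Function.update_apply]
      grind
  · rw [truth_false (by omega)]
    refine (ite_pos (k := z) (by simp [block]) (clear (d + 3) _)).of_eq ?_ (by simp; omega)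
    funext j
    simp only [block, Function.update_apply]
    grind

theorem anyBelow {i d : ℕ} (hi : i < d) {s : ℕ → ℕ} (hs : ∀ j ≥ d, s j = 0) {P : Prog} {T : ℕ}
    {p : ℕ → Prop} (hP : ∀ a < s i, ∀ x y,
      Exec P (block s d x y a 0) (block s d x y a (truth (p a))) T) :
    Exec (anyBelow i d P) s (Function.update s d (truth (∃ a < s i, p a)))
      ((T + 11) * (s i + 1)) := by
  classical
  have h₁ := (copyAdd (i := i) (j := d + 1) (k := d + 2) (by omega) (by omega) (by omega)
    (hs (d + 2) (by omega))).of_eq (s' := block s d 0 (s i) 0 0) (by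
      funext j
      have := hs j
      simp only [block, Function.update_apply]
      grind) le_rfl
  have h₂ := loop (P := .seq P (.seq (.ite (d + 3) (.inc d) .skip) (.inc (d + 2)))) (T := T + 3)
    (s i) (fun m => block s d (Nat.count p (s i - m)) m (s i - m) 0) (i := d + 1)
    (fun m _ => by simp [block]) fun m hm => by
      have hcount : Nat.count p (s i - m) =
          Nat.count p (s i - (m + 1)) + truth (p (s i - (m + 1))) := by
        rw [show s i - m = s i - (m + 1) + 1 by omega, Nat.count_succ, truth]
      have hp := hP (s i - (m + 1)) (by omega) (Nat.count p (s i - (m + 1))) m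
      have hstart : Function.update (block s d (Nat.count p (s i - (m + 1))) (m + 1)
          (s i - (m + 1)) 0) (d + 1) m =
          block s d (Nat.count p (s i - (m + 1))) m (s i - (m + 1)) 0 := by
        funext j
        simp only [block, Function.update_apply]
        grind
      rw [hstart, hcount]
      refine (hp.seq (t' := 3) ?_).mono (by omega)
      refine Exec.seq (t := 2) (t' := 1)
        (s' := block s d (Nat.count p (s i - (m + 1)) + truth (p (s i - (m + 1)))) m
          (s i - (m + 1)) 0) ?_ ((inc (d + 2) _).of_eq ?_ le_rfl)
      · by_cases h : p (s i - (m + 1))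
        · rw [truth_true h]
          refine (ite_pos (k := 0) (by simp [block]) (inc d _)).of_eq ?_ le_rfl
          funext j
          simp only [block, Function.update_apply]
          grind
        · rw [truth_false h]
          exact (ite_zero (by simp [block]) (skip _)).mono (by omega)
      · funext j
        simp only [block, Function.update_apply]
        grind
  simp only [Nat.sub_self, Nat.sub_zero, Nat.count_zero] at h₂
  have hle := Nat.count_le (p := p) (n := s i)
  have h₃ := (clear (d + 2) (block s d (Nat.count p (s i)) 0 (s i) 0)).of_eq
    (s' := block s d (Nat.count p (s i)) 0 0 0) (t' := s i + 1) (by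
      funext j
      simp only [block, Function.update_apply]
      grind) (by simp [block])
  have h₄ : Exec (.ite d (.seq (.clear d) (.inc d)) .skip) (block s d (Nat.count p (s i)) 0 0 0)
      (Function.update s d (truth (∃ a < s i, p a))) (s i + 3) := by
    rcases hc : Nat.count p (s i) with _ | z
    · rw [truth_false fun ⟨a, ha, hpa⟩ => Nat.count_iff_forall_not.1 hc a ha hpa]
      refine (ite_zero (by simp [block]) (skip _)).of_eq ?_ (by omega)
      funext j
      have := hs j
      simp only [block, Function.update_apply]
      grind
    · have : ∃ a < s i, p a := by
        by_contra! h
        rw [Nat.count_iff_forall_not.2 fun a ha => h a ha] at hc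
        omega
      rw [truth_true this]
      refine (ite_pos (k := z) (by simp [block]) ((clear d _).seq (inc d _))).of_eq ?_
        (by simp; omega)
      funext j
      have := hs j
      simp only [block, Function.update_apply]
      grind
  exact (h₁.seq (h₂.seq (h₃.seq h₄))).mono (by nlinarith)

end Exec

namespace Fm

/-- A program that sets counter `d` to the truth value of a formula whose free variables are stored
in the counters given by `ρ`, where counter `1` holds the bound for existential quantifiers. -/
def eval : Fm → (ℕ → ℕ) → ℕ → Prog
  | one i, ρ, d => .seq (.inc (d + 1)) <| .seq (.copyAdd (ρ i) (d + 2) (d + 3)) (.eq d)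
  | add i j l, ρ, d => .seq (.copyAdd (ρ i) (d + 1) (d + 3)) <|
      .seq (.copyAdd (ρ j) (d + 1) (d + 3)) <| .seq (.copyAdd (ρ l) (d + 2) (d + 3)) (.eq d)
  | mul i j l, ρ, d => .seq (.copyAdd (ρ i) (d + 2) (d + 3)) <|
      .seq (.loop (d + 2) (.copyAdd (ρ j) (d + 1) (d + 3))) <|
      .seq (.copyAdd (ρ l) (d + 2) (d + 3)) (.eq d)
  | and φ ψ, ρ, d => .seq (φ.eval ρ d) (.ite d (ψ.eval ρ d) .skip)
  | or φ ψ, ρ, d => .seq (φ.eval ρ d) (.ite d (.inc d) (ψ.eval ρ d))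
  | ball i φ, ρ, d => .seq
      (.anyBelow (ρ i) d (.seq (φ.eval (scons (d + 2) ρ) (d + 3)) (.flip (d + 3)))) (.flip d)
  | ex φ, ρ, d => .anyBelow 1 d (φ.eval (scons (d + 2) ρ) (d + 3))

theorem exec_eval_atom {d : ℕ} {s : ℕ → ℕ} {i x : ℕ} (hi : i < d) (B : ℕ) (hB : s i ≤ B) :
    Exec (.seq (.copyAdd i (d + 2) (d + 3)) (.eq d)) (block s d 0 x 0 0)
      (block s d (truth (x = s i)) 0 0 0) (4 * x + 6 * B + 7) := by
  have h := (Exec.copyAdd (i := i) (j := d + 2) (k := d + 3) (by omega) (by omega) (by omega)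
    (s := block s d 0 x 0 0) (by simp [block])).of_eq (s' := block s d 0 x (s i) 0)
    (t' := 5 * B + 2) (by
      funext j
      simp only [block, Function.update_apply]
      grind) (by simp only [block]; grind)
  exact (h.seq (Exec.eq s d x (s i))).mono (by omega)

theorem exec_eval (φ : Fm) : ∃ g, PolyBounded g ∧ ∀ ρ d s B, 1 < d → (∀ i, ρ i < d) →
    (∀ j ≥ d, s j = 0) → s 1 ≤ B → (∀ i, s (ρ i) ≤ B) →
    Exec (φ.eval ρ d) s (Function.update s d (truth (φ.Sat (s 1) fun i => s (ρ i)))) (g B) := by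
  have block_zero {s : ℕ → ℕ} {d : ℕ} (hs : ∀ j ≥ d, s j = 0) (x : ℕ) :
      block s d x 0 0 0 = Function.update s d x := by
    funext j
    have := hs j
    simp only [block, Function.update_apply]
    grind
  have add_block {s : ℕ → ℕ} {d i : ℕ} (hi : i < d) (x y B : ℕ) (hB : s i ≤ B) :
      Exec (.copyAdd i (d + 1) (d + 3)) (block s d 0 x y 0) (block s d 0 (x + s i) y 0)
        (5 * B + 2) := by
    refine (Exec.copyAdd (i := i) (j := d + 1) (k := d + 3) (by omega) (by omega) (by omega)
      (s := block s d 0 x y 0) (by simp [block])).of_eq ?_ (by simp only [block]; grind)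
    funext j
    simp only [block, Function.update_apply]
    grind
  have self_eq {s : ℕ → ℕ} {d : ℕ} (hs : ∀ j ≥ d, s j = 0) : s = block s d 0 0 0 0 := by
    rw [block_zero hs, ← hs d le_rfl, Function.update_eq_self]
  have inner {s ρ : ℕ → ℕ} {d B : ℕ} {g : ℕ → ℕ} {φ : Fm} (hd : 1 < d) (hρ : ∀ i, ρ i < d)
      (hs : ∀ j ≥ d, s j = 0) (h1 : s 1 ≤ B) (hB : ∀ i, s (ρ i) ≤ B)
      (ih : ∀ ρ d s B, 1 < d → (∀ i, ρ i < d) →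
        (∀ j ≥ d, s j = 0) → s 1 ≤ B → (∀ i, s (ρ i) ≤ B) →
        Exec (φ.eval ρ d) s (Function.update s d (truth (φ.Sat (s 1) fun i => s (ρ i)))) (g B))
      (a : ℕ) (ha : a ≤ B) (x y : ℕ) :
      Exec (φ.eval (scons (d + 2) ρ) (d + 3)) (block s d x y a 0)
        (block s d x y a (truth (φ.Sat (s 1) (scons a fun i => s (ρ i))))) (g B) := by
    have hb1 : block s d x y a 0 1 = s 1 := by simp only [block]; grind
    have hbρ (i : ℕ) : block s d x y a 0 (scons (d + 2) ρ i) = scons a (fun i => s (ρ i)) i := by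
      rcases i with _ | i
      · simp [block]
      · have := hρ i
        simp only [block, scons_succ]
        grind
    have h := ih (scons (d + 2) ρ) (d + 3) (block s d x y a 0) B (by omega) (fun i => ?_)
      (fun j hj => ?_) (hb1 ▸ h1) fun i => ?_
    · simp only [hb1, hbρ] at h
      refine h.of_eq ?_ le_rfl
      funext j
      simp only [block, Function.update_apply]
      grind
    · rcases i with _ | i
      · simp
      · have := hρ i
        simp only [scons_succ]
        omega
    · have := hs j
      simp only [block]
      grind
    · rw [hbρ]
      rcases i with _ | i
      · exact ha
      · exact hB i
  induction φ with
  | one i =>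
    refine ⟨fun B => 6 * B + 12, ((PolyBounded.const 6).mul .id).add (.const 12),
      fun ρ d s B hd hρ hs h1 hB => ?_⟩
    beta_reduce
    have h := (Exec.inc (d + 1) s).of_eq (s' := block s d 0 1 0 0) (by
      funext j
      have := hs j
      simp only [block, Function.update_apply]
      grind) le_rfl
    rw [← block_zero hs]
    refine (h.seq (exec_eval_atom (hρ i) B (hB i))).of_eq ?_ (by omega)
    simp only [Sat, eq_comm]
  | add i j l =>
    refine ⟨fun B => 24 * B + 12, ((PolyBounded.const 24).mul .id).add (.const 12),
      fun ρ d s B hd hρ hs h1 hB => ?_⟩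
    beta_reduce
    rw [← block_zero hs]
    have h₁ := add_block (hρ i) 0 0 B (hB i)
    have h₂ := add_block (hρ j) (0 + s (ρ i)) 0 B (hB j)
    rw [← self_eq hs] at h₁
    have := hB i
    have := hB j
    refine (h₁.seq (h₂.seq (exec_eval_atom (hρ l) B (hB l)))).of_eq ?_ (by omega)
    simp only [Sat, zero_add]
  | mul i j l =>
    refine ⟨fun B => 9 * B * B + 14 * B + 12, ((((PolyBounded.const 9).mul .id).mul .id).add
      ((PolyBounded.const 14).mul .id)).add (.const 12), fun ρ d s B hd hρ hs h1 hB => ?_⟩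
    beta_reduce
    rw [← block_zero hs]
    have h₁ := (Exec.copyAdd (i := ρ i) (j := d + 2) (k := d + 3) (by have := hρ i; omega)
      (by have := hρ i; omega) (by omega)
      (hs (d + 3) (by omega))).of_eq (s' := block s d 0 0 (s (ρ i)) 0) (by
        funext j
        have := hs j
        simp only [block, Function.update_apply]
        grind) (Nat.add_le_add_right (Nat.mul_le_mul_left 5 (hB i)) 2)
    have h₂ := Exec.loop (P := .copyAdd (ρ j) (d + 1) (d + 3)) (i := d + 2) (T := 5 * B + 2)
      (s (ρ i)) (fun m => block s d 0 ((s (ρ i) - m) * s (ρ j)) m 0)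
      (fun m _ => by simp [block]) fun m hm => by
        have h := add_block (hρ j) ((s (ρ i) - (m + 1)) * s (ρ j)) m B (hB j)
        rw [← Nat.succ_mul, show (s (ρ i) - (m + 1)).succ = s (ρ i) - m by omega] at h
        convert h using 1
        funext j
        simp only [block, Function.update_apply]
        grind
    simp only [Nat.sub_self, Nat.sub_zero, Nat.zero_mul] at h₂
    have hmul := Nat.mul_le_mul (hB i) (hB j)
    have hmul' := Nat.mul_le_mul_right (5 * B + 2 + 1) (hB i)
    refine (h₁.seq (h₂.seq (exec_eval_atom (hρ l) B (hB l)))).of_eq ?_ (by nlinarith)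
    simp only [Sat]
  | and φ ψ ihφ ihψ =>
    obtain ⟨g, hg, ihφ⟩ := ihφ
    obtain ⟨g', hg', ihψ⟩ := ihψ
    refine ⟨fun B => g B + g' B + 1, (hg.add hg').add (.const 1),
      fun ρ d s B hd hρ hs h1 hB => ?_⟩
    beta_reduce
    refine ((ihφ ρ d s B hd hρ hs h1 hB).seq (t' := g' B + 1) ?_).mono (by omega)
    by_cases h : φ.Sat (s 1) fun i => s (ρ i)
    · refine Exec.ite_pos (k := 0) (by simp [truth_true h]) ?_
      simpa [Sat, h, ← hs d le_rfl] using ihψ ρ d s B hd hρ hs h1 hB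
    · refine (Exec.ite_zero (by simp [truth_false h]) (Exec.skip _)).of_eq ?_ (by omega)
      simp [Sat, h]
  | or φ ψ ihφ ihψ =>
    obtain ⟨g, hg, ihφ⟩ := ihφ
    obtain ⟨g', hg', ihψ⟩ := ihψ
    refine ⟨fun B => g B + g' B + 2, (hg.add hg').add (.const 2),
      fun ρ d s B hd hρ hs h1 hB => ?_⟩
    beta_reduce
    refine ((ihφ ρ d s B hd hρ hs h1 hB).seq (t' := g' B + 2) ?_).mono (by omega)
    by_cases h : φ.Sat (s 1) fun i => s (ρ i)
    · refine (Exec.ite_pos (k := 0) (by simp [truth_true h]) (Exec.inc d _)).of_eq ?_ (by omega)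
      simp [Sat, h, truth]
    · refine (Exec.ite_zero (by simp [truth_false h]) ?_).mono (Nat.le_succ (g' B + 1))
      simpa [Sat, h, truth_false not_false, ← hs d le_rfl] using ihψ ρ d s B hd hρ hs h1 hB
  | ball i φ ih =>
    obtain ⟨g, hg, ih⟩ := ih
    refine ⟨fun B => (g B + 13) * (B + 1) + 2,
      ((hg.add (.const 13)).mul (PolyBounded.id.add (.const 1))).add (.const 2),
      fun ρ d s B hd hρ hs h1 hB => ?_⟩
    beta_reduce
    have h := Exec.anyBelow (hρ i) hs (T := g B + 2)
      (p := fun a => ¬ φ.Sat (s 1) (scons a fun i => s (ρ i)))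
      fun a ha x y => (inner hd hρ hs h1 hB ih a (ha.le.trans (hB i)) x y).seq
        ((Exec.flip (i := d + 3) (p := φ.Sat (s 1) (scons a fun i => s (ρ i)))
          (by simp [block])).of_eq (by
          funext j
          simp only [block, Function.update_apply]
          grind) le_rfl)
    refine (h.seq (Exec.flip (by simp; rfl))).of_eq ?_ ?_
    · simp [Sat]
    · have := Nat.mul_le_mul_left (g B + 13) (Nat.succ_le_succ (hB i))
      simpa using this
  | ex φ ih =>
    obtain ⟨g, hg, ih⟩ := ih
    refine ⟨fun B => (g B + 11) * (B + 1),
      (hg.add (.const 11)).mul (PolyBounded.id.add (.const 1)),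
      fun ρ d s B hd hρ hs h1 hB => ?_⟩
    beta_reduce
    exact (Exec.anyBelow hd hs fun a ha x y =>
      inner hd hρ hs h1 hB ih a (ha.le.trans h1) x y).mono (by gcongr)

/-- A program that adds to counter `0` two plus the least bound making the formula true at the value
of counter `0`. -/
def searchProg (φ : Fm) : Prog :=
  .seq (.inc 2) <| .seq (.loop 2
    (.seq (φ.eval (fun _ => 0) 3) (.ite 3 .skip (.seq (.inc 1) (.inc 2)))))
    <| .seq (.loop 1 (.inc 0)) (.seq (.inc 0) (.inc 0))

theorem exec_searchProg (φ : Fm) {μ : ℕ → ℕ} (hμ : ∀ n, φ.Sat (μ n) fun _ => n)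
    (hmin : ∀ n, ∀ w < μ n, ¬ φ.Sat w fun _ => n) : ∃ g, PolyBounded g ∧
    ∀ n, Exec φ.searchProg (Function.update 0 0 n) (Function.update 0 0 (μ n + n + 2))
      (g (μ n + n + 2)) := by
  obtain ⟨g, hg, heval⟩ := φ.exec_eval
  refine ⟨fun B => (B + 1) * (g B + 5) + 2 * B + 5, ((((PolyBounded.id.add (.const 1)).mul
    (hg.add (.const 5)))).add ((PolyBounded.const 2).mul .id)).add (.const 5), fun n => ?_⟩
  set B := μ n + n + 2 with hB
  have htest (w : ℕ) (hw : w ≤ μ n) : Exec (φ.eval (fun _ => 0) 3) (block 0 0 n w 0 0)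
      (block 0 0 n w 0 (truth (φ.Sat w fun _ => n))) (g B) := by
    refine (heval (fun _ => 0) 3 (block 0 0 n w 0 0) B (by omega) (fun _ => by omega)
      (fun j hj => ?_) (by simp [block]; omega) (fun _ => by simp [block]; omega)).of_eq ?_ le_rfl
    · simp only [block, Pi.zero_apply]
      grind
    · funext j
      simp only [block, Function.update_apply]
      grind
  have hloop (k w : ℕ) (hw : w + k = μ n) :
      Exec (.loop 2 (.seq (φ.eval (fun _ => 0) 3) (.ite 3 .skip (.seq (.inc 1) (.inc 2)))))
        (block 0 0 n w 1 0) (block 0 0 n (μ n) 0 0) ((k + 1) * (g B + 5)) := by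
    have hstart : Function.update (block 0 0 n w 1 0) 2 0 = block 0 0 n w 0 0 := by
      funext j
      simp only [block, Function.update_apply]
      grind
    have h := htest w (by omega)
    induction k generalizing w with
    | zero =>
      obtain rfl : w = μ n := hw
      rw [truth_true (hμ n)] at h
      refine (Exec.loop_pos (k := 0) (by simp [block]) (hstart ▸ h.seq (Exec.ite_pos (k := 0)
        (by simp [block]) ((Exec.skip _).of_eq ?_ le_rfl)))
        (Exec.loop_zero (by simp [block]))).mono (by omega)
      funext j
      simp only [block, Function.update_apply]
      grind
    | succ k ih =>
      rw [truth_false (hmin n w (by omega))] at h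
      refine (Exec.loop_pos (k := 0) (by simp [block]) (hstart ▸ h.seq (Exec.ite_zero
        (by simp [block]) (((Exec.inc 1 _).seq (Exec.inc 2 _)).of_eq ?_ le_rfl)))
        (ih (w + 1) (by omega) ?_ (htest _ (by omega)))).mono (by ring_nf; omega)
      all_goals
        funext j
        simp only [block, Function.update_apply]
        grind
  have h₁ := (Exec.inc 2 (Function.update 0 0 n)).of_eq (s' := block 0 0 n 0 1 0) (by
    funext j
    simp only [block, Function.update_apply, Pi.zero_apply]
    grind) le_rfl
  have h₂ := Exec.loop (P := .inc 0) (i := 1) (T := 1) (μ n)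
    (fun m => block 0 0 (n + (μ n - m)) m 0 0) (fun m _ => by simp [block]) fun m hm => by
      refine (Exec.inc 0 _).of_eq ?_ le_rfl
      funext j
      simp only [block, Function.update_apply]
      grind
  simp only [Nat.sub_self, Nat.sub_zero, Nat.add_zero] at h₂
  refine (h₁.seq ((hloop (μ n) 0 (by omega)).seq (h₂.seq ((Exec.inc 0 _).seq
    (Exec.inc 0 _))))).of_eq ?_ ?_
  · funext j
    simp only [block, Function.update_apply, Pi.zero_apply]
    grind
  · have : (μ n + 1) * (g B + 5) ≤ (B + 1) * (g B + 5) := Nat.mul_le_mul_right _ (by omega)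
    beta_reduce
    omega

end Fm

/-- The action of a deterministic machine in a state: for every symbol, the next state, the symbol
written and the head movement. -/
abbrev Row := Option Bool → ℕ × Option Bool × Move

/-- The machine whose states are the indices in a list of rows, with one further state for
acceptance. -/
def machine (rows : List Row) : NTM where
  states := rows.length + 1
  accept := rows.length
  trans := rows.zipIdx.flatMap fun p => [none, some false, some true].map fun a =>
    ⟨p.2, a, (p.1 a).1, (p.1 a).2.1, (p.1 a).2.2⟩

theorem machine_step_iff {rows : List Row} {c c' : Cfg} :
    (machine rows).Step c c' ↔ ∃ r, rows[c.state]? = some r ∧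
      c' = ⟨(r (c.tape c.pos)).1, (r (c.tape c.pos)).2.2.apply c.pos,
        Function.update c.tape c.pos (r (c.tape c.pos)).2.1⟩ := by
  have hmem (a : Option Bool) : a ∈ [none, some false, some true] := by
    rcases a with _ | _ | _ <;> simp
  constructor
  · rintro ⟨t, ht, hsrc, hread, rfl⟩
    simp only [machine, List.mem_flatMap, List.mem_map] at ht
    obtain ⟨⟨r, q⟩, hr, a, -, rfl⟩ := ht
    rw [List.mk_mem_zipIdx_iff_getElem?] at hr
    simp only at hsrc hread
    subst hsrc hread
    exact ⟨r, hr, rfl⟩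
  · rintro ⟨r, hr, rfl⟩
    refine ⟨_, List.mem_flatMap.2 ⟨(r, c.state), List.mk_mem_zipIdx_iff_getElem?.2 hr,
      List.mem_map.2 ⟨_, hmem (c.tape c.pos), rfl⟩⟩, rfl, rfl, rfl⟩

theorem machine_deterministic (rows : List Row) : (machine rows).Deterministic := by
  intro c c₁ c₂ h₁ h₂
  obtain ⟨r, hr, rfl⟩ := machine_step_iff.1 h₁
  obtain ⟨r', hr', rfl⟩ := machine_step_iff.1 h₂
  cases hr.symm.trans hr'
  rfl

/-- The second configuration is reached from the first one in at most the given number of steps. -/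
inductive Reach (M : NTM) : Cfg → Cfg → ℕ → Prop
  | refl c t : Reach M c c t
  | step {c c' c'' t} : M.Step c c' → Reach M c' c'' t → Reach M c c'' (t + 1)

namespace Reach

variable {M : NTM} {c c' c'' : Cfg} {t t' : ℕ}

theorem mono (h : Reach M c c' t) (ht : t ≤ t') : Reach M c c' t' := by
  induction h generalizing t' with
  | refl c t => exact refl _ _
  | step hs _ ih =>
    obtain ⟨t', rfl⟩ : ∃ u, t' = u + 1 := ⟨t' - 1, by omega⟩
    exact step hs (ih (by omega))

theorem trans (h : Reach M c c' t) (h' : Reach M c' c'' t') : Reach M c c'' (t + t') := by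
  induction h with
  | refl c t => exact h'.mono (by omega)
  | step hs _ ih => exact (step hs (ih h')).mono (by omega)

theorem exists_run (h : Reach M c c' t) :
    ∃ t' ≤ t, ∃ f : ℕ → Cfg, f 0 = c ∧ M.RunFrom f t' ∧ f t' = c' := by
  induction h with
  | refl c t => exact ⟨0, Nat.zero_le _, fun _ => c, rfl, fun i hi => by omega, rfl⟩
  | @step c c' c'' t hs _ ih =>
    obtain ⟨t', ht', f, h0, hf, hl⟩ := ih
    refine ⟨t' + 1, by omega, fun i => Nat.casesOn i c f, rfl, fun i hi => ?_, hl⟩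
    rcases i with _ | i
    · rw [← h0] at hs
      exact hs
    · exact hf i (by omega)

end Reach

/-- The configuration with the head on the first symbol of `R`, where the tape consists of the
reversal of `L` followed by `R`. -/
def zipCfg (q : ℕ) (L R : List Bool) : Cfg := ⟨q, L.length, inputTape (L.reverse ++ R)⟩

/-- The configuration with the head to the left of position `k`. -/
def backCfg (q k : ℕ) (x : List Bool) : Cfg := ⟨q, (k : ℤ) - 1, inputTape x⟩

theorem backCfg_cons (q : ℕ) (L R : List Bool) (a : Bool) :
    backCfg q (L.length + 1) (L.reverse ++ a :: R) = zipCfg q L (a :: R) := by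
  simp [backCfg, zipCfg]

theorem inputTape_natCast (x : List Bool) (k : ℕ) : inputTape x k = x[k]? := by
  by_cases h : k < x.length <;> simp [inputTape, h]

theorem inputTape_of_neg (x : List Bool) {i : ℤ} (hi : i < 0) : inputTape x i = none :=
  if_neg fun h => by omega

theorem inputTape_update {x y : List Bool} {k : ℕ} {b : Option Bool} (hk : y[k]? = b)
    (h : ∀ j, j ≠ k → x[j]? = y[j]?) : Function.update (inputTape x) k b = inputTape y := by
  funext i
  rcases lt_or_ge i 0 with hi | hi
  · rw [Function.update_of_ne (by omega), inputTape_of_neg _ hi, inputTape_of_neg _ hi]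
  · lift i to ℕ using hi
    rw [inputTape_natCast]
    by_cases hik : i = k
    · simp [hik, hk]
    · rw [Function.update_of_ne (by simpa using hik), inputTape_natCast, h i hik]

theorem update_inputTape_cons (L R : List Bool) (a b : Bool) :
    Function.update (inputTape (L.reverse ++ a :: R)) L.length (some b) =
      inputTape (L.reverse ++ b :: R) := by
  apply inputTape_update
  · simp
  · intro j hj
    rcases lt_or_ge j L.length with h | h
    · rw [List.getElem?_append_left (by simpa), List.getElem?_append_left (by simpa)]
    · rw [List.getElem?_append_right (by simpa), List.getElem?_append_right (by simpa)]
      rw [show j - L.reverse.length = j - L.length - 1 + 1 by simp; omega]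
      rfl

theorem update_inputTape_end (L : List Bool) (b : Bool) :
    Function.update (inputTape L.reverse) L.length (some b) = inputTape (L.reverse ++ [b]) := by
  apply inputTape_update
  · simp
  · intro j hj
    rcases lt_or_ge j L.length with h | h
    · rw [List.getElem?_append_left (by simpa)]
    · rw [List.getElem?_eq_none (by simpa), List.getElem?_eq_none (by simp; omega)]

theorem update_inputTape_erase (L : List Bool) (a : Bool) :
    Function.update (inputTape (L.reverse ++ [a])) L.length none = inputTape L.reverse := by
  apply inputTape_update
  · simp
  · intro j hj
    rcases lt_or_ge j L.length with h | h
    · rw [List.getElem?_append_left (by simpa)]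
    · rw [List.getElem?_eq_none (by simp; omega), List.getElem?_eq_none (by simpa)]

section Moves

variable {rows : List Row} {q q' : ℕ} {r : Row} {a b : Bool} {L R : List Bool}

theorem step_right (hr : rows[q]? = some r) (h : r (some a) = (q', some b, .R)) :
    (machine rows).Step (zipCfg q L (a :: R)) (zipCfg q' (b :: L) R) := by
  refine machine_step_iff.2 ⟨r, hr, ?_⟩
  simp [zipCfg, inputTape_natCast, h, Move.apply, update_inputTape_cons]

theorem step_left (hr : rows[q]? = some r) (h : r (some a) = (q', some b, .L)) :
    (machine rows).Step (zipCfg q L (a :: R)) (backCfg q' L.length (L.reverse ++ b :: R)) := by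
  refine machine_step_iff.2 ⟨r, hr, ?_⟩
  simp [zipCfg, backCfg, inputTape_natCast, h, Move.apply, update_inputTape_cons]

theorem step_append_right (hr : rows[q]? = some r) (h : r none = (q', some b, .R)) :
    (machine rows).Step (zipCfg q L []) (zipCfg q' (b :: L) []) := by
  refine machine_step_iff.2 ⟨r, hr, ?_⟩
  simp [zipCfg, inputTape_natCast, h, Move.apply, update_inputTape_end]

theorem step_append_left (hr : rows[q]? = some r) (h : r none = (q', some b, .L)) :
    (machine rows).Step (zipCfg q L []) (backCfg q' L.length (L.reverse ++ [b])) := by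
  refine machine_step_iff.2 ⟨r, hr, ?_⟩
  simp [zipCfg, backCfg, inputTape_natCast, h, Move.apply, update_inputTape_end]

theorem step_end_left (hr : rows[q]? = some r) (h : r none = (q', none, .L)) :
    (machine rows).Step (zipCfg q L []) (backCfg q' L.length L.reverse) := by
  refine machine_step_iff.2 ⟨r, hr, ?_⟩
  simp only [zipCfg, backCfg, List.append_nil, inputTape_natCast]
  simp [h, Move.apply, inputTape_natCast]

theorem step_erase (hr : rows[q]? = some r) (h : r (some a) = (q', none, .L)) :
    (machine rows).Step (zipCfg q L [a]) (backCfg q' L.length L.reverse) := by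
  refine machine_step_iff.2 ⟨r, hr, ?_⟩
  simp [zipCfg, backCfg, inputTape_natCast, h, Move.apply, update_inputTape_erase]

theorem step_stay (hr : rows[q]? = some r) (h : ∀ a, r a = (q', a, .S)) :
    (machine rows).Step (zipCfg q L R) (zipCfg q' L R) := by
  refine machine_step_iff.2 ⟨r, hr, ?_⟩
  simp [zipCfg, h, Move.apply]

theorem step_home (hr : rows[q]? = some r) (h : r none = (q', none, .R)) (x : List Bool) :
    (machine rows).Step (backCfg q 0 x) (zipCfg q' [] x) := by
  refine machine_step_iff.2 ⟨r, hr, ?_⟩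
  have h0 : inputTape x (-1) = none := inputTape_of_neg x (by omega)
  simp only [zipCfg, backCfg, Nat.cast_zero, zero_sub, h0, h]
  simp [Move.apply, ← h0]

theorem reach_home (hr : rows[q]? = some r) (h : r none = (q', none, .R)) {x : List Bool} {k : ℕ}
    (hk : k ≤ x.length) (hx : ∀ a ∈ x, r (some a) = (q, some a, .L)) :
    Reach (machine rows) (backCfg q k x) (zipCfg q' [] x) (k + 1) := by
  induction k with
  | zero => exact .step (step_home hr h x) (.refl _ _)
  | succ k ih =>
    have hsplit : x = (x.take k).reverse.reverse ++ x[k] :: x.drop (k + 1) := by simp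
    have hlen : (x.take k).reverse.length = k := by simp; omega
    have hstep := step_left hr (hx x[k] (List.getElem_mem _)) (L := (x.take k).reverse)
      (R := x.drop (k + 1))
    rw [← backCfg_cons, ← hsplit, hlen] at hstep
    exact .step hstep (ih (by omega))

end Moves

/-- The list of rows contains the given segment at the given offset. -/
def At (rows : List Row) (o : ℕ) (seg : List Row) : Prop :=
  ∀ k r, seg[k]? = some r → rows[o + k]? = some r

namespace At

variable {rows : List Row} {o : ℕ} {seg seg' : List Row}

theorem left (h : At rows o (seg ++ seg')) : At rows o seg := fun k r hk => by
  obtain ⟨hk', -⟩ := List.getElem?_eq_some_iff.1 hk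
  exact h k r (by rwa [List.getElem?_append_left hk'])

theorem right {o' : ℕ} (h : At rows o (seg ++ seg')) (ho : o' = o + seg.length) :
    At rows o' seg' := fun k r hk => by
  rw [ho, add_assoc]
  exact h _ r (by rwa [List.getElem?_append_right (by omega), Nat.add_sub_cancel_left])

end At

/-- Counters in unary notation. -/
def enc (l : List ℕ) : List Bool := l.flatMap fun n => List.replicate n true ++ [false]

/-- Rows that move the head to the block of counter `i`. -/
def seekRows (o i : ℕ) : List Row := (List.range i).map fun k a =>
  (if a = some false then o + k + 1 else o + k, a, .R)

theorem reach_replicate {rows : List Row} {q n : ℕ} {r : Row} (hr : rows[q]? = some r)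
    (h : r (some true) = (q, some true, .R)) (L R : List Bool) :
    Reach (machine rows) (zipCfg q L (List.replicate n true ++ R))
      (zipCfg q (List.replicate n true ++ L) R) n := by
  induction n generalizing L with
  | zero => exact .refl _ _
  | succ n ih =>
    have hL : List.replicate (n + 1) true ++ L = List.replicate n true ++ true :: L := by
      simp [List.replicate_succ']
    rw [hL]
    exact .step (step_right hr h) (ih (true :: L))

theorem reach_seek {rows : List Row} {o : ℕ} (l : List ℕ) (h : At rows o (seekRows o l.length))
    (L R : List Bool) : Reach (machine rows) (zipCfg o L (enc l ++ R))
      (zipCfg (o + l.length) ((enc l).reverse ++ L) R) (enc l).length := by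
  have key (l : List ℕ) (m k : ℕ) (hk : k + l.length ≤ m) (h : At rows o (seekRows o m))
      (L : List Bool) : Reach (machine rows) (zipCfg (o + k) L (enc l ++ R))
      (zipCfg (o + k + l.length) ((enc l).reverse ++ L) R) (enc l).length := by
    induction l generalizing k L with
    | nil => exact .refl _ _
    | cons n l ih =>
      rw [List.length_cons] at hk
      have hrow := h k _ (by
        rw [seekRows, List.getElem?_map, List.getElem?_range (by omega)]; rfl)
      have h₁ := reach_replicate (n := n) hrow (by simp) L (false :: (enc l ++ R))
      have h₂ := ih (k + 1) (by omega) (false :: (List.replicate n true ++ L))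
      rw [← Nat.add_assoc] at h₂
      have h := h₁.trans (Reach.step (step_right (b := false) (q' := o + k + 1) hrow rfl) h₂)
      convert h using 1
      · simp [enc]
      · rw [List.length_cons, Nat.add_right_comm (o + k) 1, ← Nat.add_assoc]
        simp [enc]
      · simp [enc]
  simpa using key l l.length 0 (by omega) h L

/-- The action of moving the head to the start of the tape. -/
def homeRow (q q' : ℕ) : Row
  | none => (q', none, .R)
  | some b => (q, some b, .L)

theorem reach_homeRow {rows : List Row} {q q' k : ℕ} (h : rows[q]? = some (homeRow q q'))
    {x : List Bool} (hk : k ≤ x.length) :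
    Reach (machine rows) (backCfg q k x) (zipCfg q' [] x) (k + 1) :=
  reach_home h rfl hk fun _ _ => rfl

/-- The action of writing a symbol and remembering the symbol read, in states `q` and `q + 1`. -/
def carryRow (q : ℕ) (b : Bool) : Row
  | none => (q + 2, some b, .L)
  | some a => (if a then q else q + 1, some b, .R)

theorem reach_insert {rows : List Row} {q : ℕ} (h₁ : rows[q]? = some (carryRow q true))
    (h₀ : rows[q + 1]? = some (carryRow q false)) (b : Bool) (L R : List Bool) :
    Reach (machine rows) (zipCfg (if b then q else q + 1) L R)
      (backCfg (q + 2) (L.length + R.length) (L.reverse ++ b :: R)) (R.length + 1) := by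
  have hrow (b : Bool) : rows[if b then q else q + 1]? = some (carryRow q b) := by
    cases b <;> assumption
  induction R generalizing b L with
  | nil => exact .step (step_append_left (hrow b) rfl) (.refl _ _)
  | cons a R ih =>
    have h := ih a (b :: L)
    rw [List.reverse_cons, List.append_assoc, List.length_cons, Nat.add_right_comm] at h
    exact .step (step_right (hrow b) rfl) h

/-- Rows that increment counter `i`. -/
def incRows (o i : ℕ) : List Row := seekRows o i ++
  [carryRow (o + i) true, carryRow (o + i) false, homeRow (o + i + 2) (o + i + 3)]

/-- Rows that go to state `o + i + 8` after decrementing counter `i`, or to state `z` if the counter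
is zero. -/
def decRows (o i z : ℕ) : List Row := seekRows o i ++
  [fun a => if a = some true then (o + i + 2, a, .R) else (o + i + 6, a, .L),
    fun a => (o + i + 2, a, .R),
    fun a => (if a = some false then o + i + 3 else if a = some true then o + i + 4 else o + i + 5,
      a, .L),
    fun _ => (o + i + 1, some false, .R),
    fun _ => (o + i + 1, some true, .R),
    fun _ => (o + i + 7, none, .L),
    homeRow (o + i + 6) z,
    homeRow (o + i + 7) (o + i + 8)]

theorem length_seekRows (o i : ℕ) : (seekRows o i).length = i := by simp [seekRows]

theorem reach_inc {rows : List Row} {o : ℕ} (l : List ℕ) (h : At rows o (incRows o l.length))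
    (R : List Bool) : Reach (machine rows) (zipCfg o [] (enc l ++ R))
      (zipCfg (o + (l.length + 3)) [] (enc l ++ true :: R)) (2 * (enc l ++ R).length + 3) := by
  have hs := reach_seek l h.left [] R
  have hr := h.right (o' := o + l.length) (by rw [length_seekRows])
  have hi := reach_insert (hr 0 _ rfl) (hr 1 _ rfl) true ((enc l).reverse ++ []) R
  simp only [List.append_nil, List.reverse_reverse, List.length_reverse] at hs hi
  have hh := reach_homeRow (hr 2 _ rfl) (x := enc l ++ true :: R)
    (k := (enc l).length + R.length) (by simp)
  exact ((hs.trans hi).trans hh).mono (by simp; omega)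

theorem reach_dec_zero {rows : List Row} {o z : ℕ} (l : List ℕ)
    (h : At rows o (decRows o l.length z)) (R : List Bool) :
    Reach (machine rows) (zipCfg o [] (enc l ++ false :: R)) (zipCfg z [] (enc l ++ false :: R))
      (2 * (enc l ++ false :: R).length + 2) := by
  have hs := reach_seek l h.left [] (false :: R)
  have hr := h.right (o' := o + l.length) (by rw [length_seekRows])
  have ht := step_left (hr 0 _ rfl) rfl (a := false) (L := (enc l).reverse) (R := R)
  simp only [List.append_nil, List.reverse_reverse, List.length_reverse] at hs ht
  have hh := reach_homeRow (hr 6 _ rfl) (x := enc l ++ false :: R) (k := (enc l).length) (by simp)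
  exact (hs.trans (.step ht hh)).mono (by simp; omega)

theorem reach_dec_pos {rows : List Row} {o z : ℕ} (l : List ℕ)
    (h : At rows o (decRows o l.length z)) (R : List Bool) :
    Reach (machine rows) (zipCfg o [] (enc l ++ true :: R))
      (zipCfg (o + (l.length + 8)) [] (enc l ++ R)) (5 * (enc l ++ true :: R).length + 4) := by
  have hs := reach_seek l h.left [] (true :: R)
  have hr := h.right (o' := o + l.length) (by rw [length_seekRows])
  generalize ho : o + l.length = q at hs hr
  have hdel (L R : List Bool) (c : Bool) : Reach (machine rows) (zipCfg (q + 2) (c :: L) R)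
      (backCfg (q + 7) (L.length + R.length) (L.reverse ++ R)) (3 * R.length + 2) := by
    induction R generalizing L c with
    | nil =>
      have h₁ := step_end_left (hr 2 _ rfl) rfl (L := c :: L)
      rw [List.reverse_cons, List.length_cons, backCfg_cons] at h₁
      have h₂ := step_erase (hr 5 _ rfl) rfl (L := L) (a := c)
      rw [List.append_nil]
      exact .step (by simpa [ho] using h₁) (.step (by simpa [ho] using h₂) (.refl _ _))
    | cons a R ih =>
      have h₁ := step_left (hr 2 _ rfl) rfl (L := c :: L) (a := a) (R := R)
      rw [List.reverse_cons, List.length_cons, List.append_assoc, List.singleton_append,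
        backCfg_cons] at h₁
      have h₂ : (machine rows).Step (zipCfg (if a then q + 4 else q + 3) L (c :: a :: R))
          (zipCfg (q + 1) (a :: L) (a :: R)) := by
        cases a
        · simpa [ho] using step_right (hr 3 _ rfl) rfl (L := L) (a := c)
        · simpa [ho] using step_right (hr 4 _ rfl) rfl (L := L) (a := c)
      have h₃ := step_right (hr 1 _ rfl) rfl (L := a :: L) (a := a) (R := R)
      have h₄ := ih (a :: L) a
      rw [List.reverse_cons, List.length_cons, List.append_assoc, List.singleton_append,
        Nat.add_right_comm] at h₄
      exact .step (by cases a <;> simpa [ho] using h₁)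
        (.step h₂ (.step (by simpa [ho] using h₃) h₄))
  have ht := step_right (hr 0 _ rfl) rfl (a := true) (L := (enc l).reverse) (R := R)
  have hd := hdel (enc l).reverse R true
  have hh := reach_homeRow (q := q + 7) (q' := q + 8)
    (by simpa [ho] using hr 7 _ rfl) (x := enc l ++ R) (k := (enc l).length + R.length) (by simp)
  simp only [List.append_nil, List.reverse_reverse, List.length_reverse] at hs ht hd
  rw [← Nat.add_assoc, ho]
  exact (hs.trans (.step (by simpa [ho] using ht) (hd.trans hh))).mono (by simp; omega)

theorem length_decRows (o i z : ℕ) : (decRows o i z).length = i + 8 := by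
  simp [decRows, length_seekRows]

namespace Prog

/-- A bound for the counters of a program. -/
def width : Prog → ℕ
  | skip => 0
  | inc i => i + 1
  | seq P Q => max P.width Q.width
  | ite i P Q => max (i + 1) (max P.width Q.width)
  | loop i P => max (i + 1) P.width

/-- The number of states used by a program. -/
def size : Prog → ℕ
  | skip => 0
  | inc i => i + 3
  | seq P Q => P.size + Q.size
  | ite i P Q => i + 8 + P.size + 1 + Q.size
  | loop i P => i + 8 + P.size + 1

/-- The rows that simulate a program, where the first row has number `o`. -/
def compile : Prog → ℕ → List Row
  | skip, _ => []
  | inc i, o => incRows o i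
  | seq P Q, o => P.compile o ++ Q.compile (o + P.size)
  | ite i P Q, o => (decRows o i (o + (i + 8 + P.size + 1)) ++ P.compile (o + (i + 8)) ++
      [fun a => (o + (i + 8 + P.size + 1 + Q.size), a, .S)]) ++ Q.compile (o + (i + 8 + P.size + 1))
  | loop i P, o => decRows o i (o + (i + 8 + P.size + 1)) ++ P.compile (o + (i + 8)) ++
      [fun a => (o, a, .S)]

theorem length_compile (P : Prog) (o : ℕ) : (P.compile o).length = P.size := by
  induction P generalizing o with
  | skip => rfl
  | inc i => simp [compile, size, incRows, length_seekRows]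
  | seq P Q ihP ihQ => simp [compile, size, ihP, ihQ]
  | ite i P Q ihP ihQ => simp [compile, size, length_decRows, ihP, ihQ]; omega
  | loop i P ih => simp [compile, size, length_decRows, ih]; omega

end Prog

/-- The tape contents representing the first `K` counters of a store. -/
def storeTape (K : ℕ) (s : ℕ → ℕ) : List Bool := enc ((List.range K).map s)

theorem exists_storeTape_update {K i : ℕ} (hi : i < K) (s : ℕ → ℕ) : ∃ l R, l.length = i ∧
    ∀ v, storeTape K (Function.update s i v) = enc l ++ (List.replicate v true ++ false :: R) := by
  refine ⟨(List.range i).map s, enc ((List.range' (i + 1) (K - (i + 1))).map s), by simp,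
    fun v => ?_⟩
  have hK : List.range K = List.range i ++ i :: List.range' (i + 1) (K - (i + 1)) := by
    rw [List.range_eq_range', List.range_eq_range', ← List.range'_succ,
      show K - (i + 1) + 1 = K - i by omega]
    have h := List.range'_append_1 (s := 0) (m := i) (n := K - i)
    rw [Nat.zero_add, Nat.add_sub_cancel' hi.le] at h
    exact h.symm
  have h₁ : (List.range i).map (Function.update s i v) = (List.range i).map s :=
    List.map_congr_left fun j hj => Function.update_of_ne (List.mem_range.1 hj).ne _ _
  have h₂ : (List.range' (i + 1) (K - (i + 1))).map (Function.update s i v) =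
      (List.range' (i + 1) (K - (i + 1))).map s :=
    List.map_congr_left fun j hj => Function.update_of_ne (by
      rw [List.mem_range'_1] at hj; omega) _ _
  rw [storeTape, hK, List.map_append, List.map_cons, h₁, h₂]
  simp [enc]

theorem length_storeTape_update {K i : ℕ} (hi : i < K) (s : ℕ → ℕ) (v : ℕ) :
    (storeTape K (Function.update s i v)).length + s i = (storeTape K s).length + v := by
  obtain ⟨l, R, -, h⟩ := exists_storeTape_update hi s
  have h' := h (s i)
  rw [Function.update_eq_self] at h'
  rw [h', h]
  simp only [List.length_append, List.length_replicate]
  omega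

theorem Exec.length_storeTape {P : Prog} {s s' : ℕ → ℕ} {t K : ℕ} (h : Exec P s s' t)
    (hK : P.width ≤ K) : (storeTape K s').length ≤ (storeTape K s).length + t := by
  induction h with
  | skip s => rfl
  | inc i s =>
    have := length_storeTape_update (K := K) hK s (s i + 1)
    omega
  | seq _ _ ih ih' =>
    simp only [Prog.width, max_le_iff] at hK
    have := ih hK.1
    have := ih' hK.2
    omega
  | ite_zero _ _ ih =>
    simp only [Prog.width, max_le_iff] at hK
    have := ih hK.2.2
    omega
  | @ite_pos i P Q s s' t k hs _ ih =>
    simp only [Prog.width, max_le_iff] at hK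
    have := ih hK.2.1
    have := length_storeTape_update (K := K) hK.1 s k
    omega
  | loop_zero _ => omega
  | @loop_pos i P s s' s'' t t' k hs _ _ ih ih' =>
    have := ih' hK
    simp only [Prog.width, max_le_iff] at hK
    have := ih hK.2
    have := length_storeTape_update (K := K) hK.1 s k
    omega
  | mono _ _ ih =>
    have := ih hK
    omega

theorem reach_storeTape_inc {rows : List Row} {o i K : ℕ} (h : At rows o (incRows o i)) (hi : i < K)
    (s : ℕ → ℕ) : Reach (machine rows) (zipCfg o [] (storeTape K s))
      (zipCfg (o + (i + 3)) [] (storeTape K (Function.update s i (s i + 1))))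
      (2 * (storeTape K s).length + 3) := by
  obtain ⟨l, R, rfl, hl⟩ := exists_storeTape_update hi s
  have hl' := hl (s l.length)
  rw [Function.update_eq_self] at hl'
  rw [hl', hl]
  exact reach_inc l h _

theorem reach_storeTape_dec_zero {rows : List Row} {o i z K : ℕ} (h : At rows o (decRows o i z))
    (hi : i < K) {s : ℕ → ℕ} (hs : s i = 0) :
    Reach (machine rows) (zipCfg o [] (storeTape K s)) (zipCfg z [] (storeTape K s))
      (2 * (storeTape K s).length + 2) := by
  obtain ⟨l, R, rfl, hl⟩ := exists_storeTape_update hi s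
  have hl' := hl (s l.length)
  rw [Function.update_eq_self, hs] at hl'
  rw [hl']
  exact reach_dec_zero l h _

theorem reach_storeTape_dec_pos {rows : List Row} {o i z k K : ℕ} (h : At rows o (decRows o i z))
    (hi : i < K) {s : ℕ → ℕ} (hs : s i = k + 1) :
    Reach (machine rows) (zipCfg o [] (storeTape K s))
      (zipCfg (o + (i + 8)) [] (storeTape K (Function.update s i k)))
      (5 * (storeTape K s).length + 4) := by
  obtain ⟨l, R, rfl, hl⟩ := exists_storeTape_update hi s
  have hl' := hl (s l.length)
  rw [Function.update_eq_self, hs] at hl'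
  rw [hl', hl]
  exact reach_dec_pos l h _

theorem Exec.reach {rows : List Row} {P : Prog} {s s' : ℕ → ℕ} {t K o N : ℕ} (h : Exec P s s' t)
    (hK : P.width ≤ K) (hP : At rows o (P.compile o)) (hN : (storeTape K s).length + t ≤ N) :
    Reach (machine rows) (zipCfg o [] (storeTape K s)) (zipCfg (o + P.size) [] (storeTape K s'))
      (t * (5 * N + 5)) := by
  induction h generalizing o with
  | skip s => exact .refl _ _
  | inc i s => exact (reach_storeTape_inc hP hK s).mono (by omega)
  | seq h _ ih ih' =>
    simp only [Prog.width, max_le_iff] at hK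
    have := h.length_storeTape hK.1
    have h₂ := ih' hK.2 (hP.right (by rw [Prog.length_compile])) (by omega)
    rw [Nat.add_assoc] at h₂
    exact ((ih hK.1 hP.left (by omega)).trans h₂).mono (by ring_nf; omega)
  | ite_zero hs h ih =>
    simp only [Prog.width, max_le_iff] at hK
    have h₁ := reach_storeTape_dec_zero hP.left.left.left hK.1 hs
    have h₂ := ih hK.2.2 (hP.right (by
      simp [Prog.length_compile, length_decRows]; omega)) (by omega)
    rw [Nat.add_assoc o] at h₂
    refine (h₁.trans h₂).mono ?_
    ring_nf
    omega
  | @ite_pos i P Q s s' t k hs h ih =>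
    simp only [Prog.width, max_le_iff] at hK
    have := length_storeTape_update (K := K) hK.1 s k
    have h₁ := reach_storeTape_dec_pos hP.left.left.left hK.1 hs
    have h₂ := ih hK.2.1 (hP.left.left.right (by simp [length_decRows])) (by omega)
    have h₃ := step_stay ((hP.left.right (o' := o + (i + 8) + P.size)
      (by simp [length_decRows, Prog.length_compile]; omega)) 0 _ rfl) (fun _ => rfl) (L := [])
      (R := storeTape K s')
    refine ((h₁.trans h₂).trans (.step h₃ (.refl _ 0))).mono ?_
    ring_nf
    omega
  | loop_zero hs =>
    simp only [Prog.width, max_le_iff] at hK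
    exact (reach_storeTape_dec_zero hP.left.left hK.1 hs).mono (by omega)
  | @loop_pos i P s s' s'' t t' k hs h _ ih ih' =>
    have hK' := hK
    simp only [Prog.width, max_le_iff] at hK
    have := length_storeTape_update (K := K) hK.1 s k
    have := h.length_storeTape hK.2
    have h₁ := reach_storeTape_dec_pos hP.left.left hK.1 hs
    have h₂ := ih hK.2 (hP.left.right (by simp [length_decRows])) (by omega)
    have h₃ := step_stay ((hP.right (o' := o + (i + 8) + P.size)
      (by simp [length_decRows, Prog.length_compile]; omega)) 0 _ rfl) (fun _ => rfl) (L := [])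
      (R := storeTape K s')
    refine ((h₁.trans h₂).trans (.step h₃ (ih' hK' hP (by omega)))).mono ?_
    ring_nf
    omega
  | mono _ ht ih =>
    exact (ih hK hP (by omega)).mono (by gcongr)

theorem storeTape_update_zero (K n : ℕ) : storeTape (K + 1) (Function.update 0 0 n) =
    List.replicate n true ++ List.replicate (K + 1) false := by
  have h (k : ℕ) : enc (List.replicate k 0) = List.replicate k false := by
    induction k with
    | zero => rfl
    | succ k ih => rw [List.replicate_succ, List.replicate_succ, ← ih]; rfl
  have hmap : (List.range (K + 1)).map (Function.update 0 0 n) = n :: List.replicate K 0 := by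
    rw [List.range_succ_eq_map, List.map_cons, List.map_map]
    exact congrArg₂ List.cons (by simp)
      (List.eq_replicate_iff.2 ⟨by simp, by simp⟩)
  rw [storeTape, hmap, List.replicate_succ, ← h]
  simp [enc]

/-- Rows that append `K` separators to the input. -/
def preludeRows (K : ℕ) : List Row :=
  (List.range K).map (fun k a => if a = none then (k + 1, some false, .R) else (k, a, .R)) ++
    [fun a => (K + 1, a, .L), homeRow (K + 1) (K + 2)]

theorem reach_prelude {rows : List Row} {K : ℕ} (h : At rows 0 (preludeRows (K + 1))) (n : ℕ) :
    Reach (machine rows) (initCfg (unary n))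
      (zipCfg (K + 3) [] (storeTape (K + 1) (Function.update 0 0 n))) (2 * (K + 1 + n) + 2) := by
  have hrow (k : ℕ) (hk : k < K + 1) : rows[k]? = some fun a =>
      if a = none then (k + 1, some false, .R) else (k, a, .R) := by
    have := h.left k _ (by rw [List.getElem?_map, List.getElem?_range hk]; rfl)
    rwa [Nat.zero_add] at this
  have h₁ := reach_replicate (hrow 0 (by omega)) rfl [] [] (n := n)
  have h₂ (m : ℕ) (hm : m ≤ K + 1) (L : List Bool) : Reach (machine rows) (zipCfg 0 L [])
      (zipCfg m (List.replicate m false ++ L) []) m := by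
    induction m with
    | zero => exact .refl _ _
    | succ m ih =>
      exact (ih (by omega)).trans
        (.step (step_append_right (hrow m (by omega)) rfl) (.refl _ 0))
  have hr := h.right (o' := K + 1) (by simp)
  have h₃ := step_end_left (hr 0 _ rfl) rfl
    (L := List.replicate (K + 1) false ++ List.replicate n true)
  have h₄ := reach_homeRow (hr 1 _ rfl) (k := K + 1 + n)
    (x := List.replicate n true ++ List.replicate (K + 1) false) (by simp; omega)
  rw [storeTape_update_zero]
  simp only [List.append_nil] at h₁
  simp only [List.reverse_append, List.reverse_replicate, List.length_append,
    List.length_replicate] at h₃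
  exact (h₁.trans ((h₂ (K + 1) le_rfl _).trans (.step h₃ h₄))).mono (by omega)

/-- Rows that erase the separators at the end of the tape. -/
def finaleRows (o : ℕ) : List Row :=
  [fun a => if a = none then (o + 1, none, .L) else (o, a, .R),
    fun a => if a = none then (o + 2, none, .R) else
      (o + 1, if a = some true then a else none, .L)]

theorem reach_finale {rows : List Row} {o : ℕ} (h : At rows o (finaleRows o)) (m k : ℕ) :
    Reach (machine rows) (zipCfg o [] (List.replicate m true ++ List.replicate k false))
      (zipCfg (o + 2) [] (unary m)) (2 * (m + k) + 2) := by
  have h₁ (L R : List Bool) : Reach (machine rows) (zipCfg o L R)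
      (zipCfg o (R.reverse ++ L) []) R.length := by
    induction R generalizing L with
    | nil => exact .refl _ _
    | cons a R ih =>
      have := ih (a :: L)
      rw [List.reverse_cons, List.append_assoc]
      exact .step (step_right (h 0 _ rfl) rfl) this
  have h₂ := step_end_left (h 0 _ rfl) rfl
    (L := List.replicate k false ++ List.replicate m true)
  have h₃ (k : ℕ) : Reach (machine rows)
      (backCfg (o + 1) (m + k) (List.replicate m true ++ List.replicate k false))
      (backCfg (o + 1) m (List.replicate m true)) k := by
    induction k with
    | zero => simpa using Reach.refl _ _
    | succ k ih =>
      have hs := step_erase (h 1 _ rfl) rfl (a := false)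
        (L := List.replicate k false ++ List.replicate m true)
      rw [← backCfg_cons] at hs
      simp only [List.reverse_append, List.reverse_replicate, List.length_append,
        List.length_replicate, List.append_assoc, ← List.replicate_succ'] at hs
      rw [Nat.add_comm k m] at hs
      exact .step hs ih
  have h₄ := reach_home (h 1 _ rfl) (q' := o + 2) rfl (x := List.replicate m true) (k := m)
    (by simp) (by
      intro a ha
      rw [List.eq_of_mem_replicate ha]
      rfl)
  have h₅ := h₁ [] (List.replicate m true ++ List.replicate k false)
  simp only [List.append_nil, List.reverse_append, List.reverse_replicate, List.length_append,
    List.length_replicate] at h₂ h₅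
  rw [Nat.add_comm k m] at h₂
  exact (h₅.trans (.step h₂ ((h₃ k).trans h₄))).mono (by omega)

theorem exists_machine (P : Prog) : ∃ M : NTM, M.Deterministic ∧ ∃ K, ∀ n m t,
    Exec P (Function.update 0 0 n) (Function.update 0 0 m) t →
    ∃ t' ≤ (t + 1) * (5 * (K + n + t) + 5), M.ComputesIn (unary n) (unary m) t' := by
  let K := P.width
  let rows := preludeRows (K + 1) ++ P.compile (K + 3) ++ finaleRows (K + 3 + P.size)
  refine ⟨machine rows, machine_deterministic _, K + 1, fun n m t h => ?_⟩
  have hrows : At rows 0 rows := fun k r hk => by rwa [Nat.zero_add]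
  have hlen : (preludeRows (K + 1)).length = K + 3 := by simp [preludeRows]
  have hn : (storeTape (K + 1) (Function.update 0 0 n)).length = K + 1 + n := by
    rw [storeTape_update_zero]; simp; omega
  have hm := h.length_storeTape (Nat.le_succ P.width)
  rw [hn, storeTape_update_zero, List.length_append, List.length_replicate,
    List.length_replicate] at hm
  have h₁ := reach_prelude hrows.left.left n
  have h₂ := h.reach (Nat.le_succ P.width) (hrows.left.right (by rw [hlen, Nat.zero_add]))
    (N := K + 1 + n + t) (Nat.add_le_add_right hn.le t)
  have h₃ := reach_finale (hrows.right (o' := K + 3 + P.size)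
    (by rw [List.length_append, hlen, Prog.length_compile, Nat.zero_add])) m (K + 1)
  rw [← storeTape_update_zero] at h₃
  obtain ⟨t', ht', f, hf0, hf, hft⟩ := ((h₁.trans h₂).trans h₃).exists_run
  have hacc : (machine rows).accept = K + 3 + P.size + 2 := by
    simp [machine, rows, hlen, Prog.length_compile, finaleRows]
    omega
  refine ⟨t', ht'.trans ?_, f, hf0, hf, ?_⟩
  · change m + (K + 1) ≤ _ at hm
    rw [Nat.add_one_mul t]
    omega
  · rw [hft, hacc]
    exact ⟨rfl, rfl, rfl⟩

theorem strLen_unary {k : ℕ} (hk : 2 ≤ k) : strLen (unary k) = k := by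
  simp [strLen, unary, hk]

theorem PolyBounded.runtime {g : ℕ → ℕ} (hg : PolyBounded g) (K : ℕ) :
    PolyBounded fun B => (g B + 1) * (5 * (K + B + g B) + 5) :=
  (hg.add (.const 1)).mul
    (((PolyBounded.const 5).mul (((PolyBounded.const K).add .id).add hg)).add (.const 5))

/-- **Lemma 6.1**: every computable `f` is dominated by an increasing `h`
    such that (i) `h(n) ≥ f(n²)`; (ii) `1^n ↦ 1^{h(n)}` is computable in time
    `h(n)^{O(1)}`; (iii) some sentence `φ_h` holds in `S(x)` iff `x = 1^{h(n)}`
    for some `n`; (iv) some formula defines the element `n` in `S(1^{h(n)})`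
    for every `n ≥ 2`. -/
theorem dominating_ac0_invertible_function (f : ℕ → ℕ) (hf : Computable f) :
    ∃ h : ℕ → ℕ, StrictMono h ∧
      (∀ n : ℕ, f (n ^ 2) ≤ h n) ∧
      (∃ M : NTM, M.Deterministic ∧ ∃ c : ℕ,
        ∀ n : ℕ, ∃ t ≤ c * (h n + 1) ^ c, M.ComputesIn (unary n) (unary (h n)) t) ∧
      (∃ φh : LOne.Sentence,
        ∀ x : Str, 2 ≤ x.length → (strSat x φh ↔ ∃ n : ℕ, x = unary (h n))) ∧
      (∃ ψ : LOne.Formula (Fin 1),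
        ∀ n : ℕ, 2 ≤ n →
          n < strLen (unary (h n)) ∧
          ∀ a : Fin (strLen (unary (h n))),
            ((letI := strStructure (unary (h n)); ψ.Realize (fun _ : Fin 1 => a)) ↔
              (a : ℕ) = n)) := by
  classical
  obtain ⟨φ, hex, hlt, hmono⟩ := exists_dominating_formula hf
  let μ (n : ℕ) : ℕ := Nat.find (hex n)
  have hsat (n : ℕ) : φ.Sat (μ n) fun _ => n := Nat.find_spec (hex n)
  have hmin (n : ℕ) : ∀ w < μ n, ¬ φ.Sat w fun _ => n := fun _ hw => Nat.find_min (hex n) hw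
  have hdef := StrDef.length_eq_find φ μ fun n w => Nat.find_eq_iff (hex n)
  let h (n : ℕ) : ℕ := μ n + n + 2
  have hh : StrictMono h := fun m n hmn => by
    have : μ m ≤ μ n := Nat.find_min' (hex m) (hmono m n _ hmn.le (hsat n))
    change μ m + m + 2 < μ n + n + 2
    omega
  have hlen (n : ℕ) : strLen (unary (h n)) = h n := strLen_unary (Nat.le_add_left 2 _)
  have hlt' (n : ℕ) : n < strLen (unary (h n)) := by
    rw [hlen]
    change n < μ n + n + 2
    omega
  refine ⟨h, hh, fun n => ?_, ?_, ?_, ?_⟩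
  · have := hlt n _ (hsat n)
    change _ ≤ μ n + n + 2
    omega
  · obtain ⟨g, hg, hexec⟩ := φ.exec_searchProg hsat hmin
    obtain ⟨M, hM, K, hrun⟩ := exists_machine φ.searchProg
    obtain ⟨c, hc⟩ := hg.runtime K
    refine ⟨M, hM, c, fun n => ?_⟩
    obtain ⟨t, ht, hcomp⟩ := hrun n (h n) _ (hexec n)
    have hn : n ≤ h n := hh.le_apply
    refine ⟨t, (ht.trans ?_).trans (hc (h n)), hcomp⟩
    exact Nat.mul_le_mul_left _ (Nat.add_le_add_right (Nat.mul_le_mul_left 5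
      (Nat.add_le_add_right (Nat.add_le_add_left hn K) _)) 5)
  · obtain ⟨χ, hχ⟩ := (hdef.and (StrDef.all
      (A := fun x a _ => x.getD a false = true) (StrDef.bit 0))).exists_sentence
    refine ⟨χ, fun x hx => (hχ x).trans ⟨?_, ?_⟩⟩
    · rintro ⟨a, ha, hx1⟩
      have hxl : strLen x = x.length := max_eq_left hx
      refine ⟨a, List.eq_replicate_iff.2 ⟨hxl.symm.trans ha, fun b hb => ?_⟩⟩
      obtain ⟨i, hi, rfl⟩ := List.getElem_of_mem hb
      have := hx1 ⟨i, hxl ▸ hi⟩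
      rwa [List.getD_eq_getElem _ _ hi] at this
    · rintro ⟨n, rfl⟩
      refine ⟨⟨n, hlt' n⟩, hlen n, fun a => ?_⟩
      have ha : (a : ℕ) < (unary (h n)).length :=
        a.2.trans_eq ((hlen n).trans List.length_replicate.symm)
      rw [List.getD_eq_getElem _ _ ha]
      exact List.getElem_replicate _
  · obtain ⟨ψ, hψ⟩ := hdef.exists_formula
    refine ⟨ψ, fun n _ => ⟨hlt' n, fun a => (hψ _ a).trans ⟨fun ha => ?_, fun ha => ?_⟩⟩⟩
    · exact (hh.injective ((hlen n).symm.trans ha)).symm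
    · exact (hlen n).trans (congrArg h ha.symm)

end PFW
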